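/- Let H be a complex separable Hilbert space and let ℒ = {0, M, N, H} be a subspace lattice with two atoms on H. Then Alg ℒ is a zero product determined Banach algebra. -/

import Mathlib

open scoped Topology

/-- A complex Banach algebra `A` is *zero product determined*. -/
def ZeroProductDetermined (A : Type*) [NonUnitalNonAssocRing A] [Module ℂ A]
    [TopologicalSpace A] : Prop :=
  ∀ φ : A →ₗ[ℂ] A →ₗ[ℂ] ℂ, Continuous (fun p : A × A => φ p.1 p.2) →
    (∀ x y : A, x * y = 0 → φ x y = 0) →
    ∃ τ : A →L[ℂ] ℂ, ∀ x y : A, φ x y = τ (x * y)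

/-!
A bilinear form `φ` that vanishes on zero products is balanced over every idempotent `e`, in the
sense that `φ (x e) y = φ x (e y)`. The elements over which a continuous `φ` is balanced form a
closed subalgebra, so a Banach algebra that is generated topologically by its idempotents is zero
product determined. The closed algebra generated by the idempotents contains the two-sided ideal
generated by the corners `e A (1 - e)`.

To see that `Alg {0, M, N, H}` is generated by idempotents, let `Q` be the projection of `N` to
`Mᗮ`. The part of `N` where `Q* Q > 1 / 16` makes a positive angle with `M`. On the rest, `Q` equals
a diagonal operator `S = diag (4 ^ (-ℓ i))`, up to an operator `R` bounded below: group the spectrum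
of `Q* Q` into the levels `(16⁻⁽ⁿ⁺¹⁾, 16⁻ⁿ]`. Up to similarity, `H = X ⊕ Y ⊕ E ⊕ E`, where `M` is
`X ⊕ E`, with `E` the third summand, and `N` is the sum of `Y` and the graph of `S`.

In this position the algebra splits into corners, of which only the one on `E ⊕ E` matters. It
consists of the pairs `(z, d)` with `d S = S z` and of the operators `b (k' - S k)`. If a level is
repeated, an involution of the indices reduces to one index per level; then `S = diag (4 ^ (-ℓ n))`
with `ℓ` strictly increasing, and triangular truncation is bounded because the entries of `d` and
`z` differ by the factors `4 ^ (ℓ m - ℓ n)`. Strictly triangular elements factor through the shift,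
which changes parity and hence is off-diagonal; diagonal ones are limits of combinations of
projections. The elements `b` form a module over the pairs `(z, d)`, and those that lie in the
algebra generated by the idempotents are given by a left ideal of `B(E)` that contains the shift and
the coordinate projections, hence `1`.
-/

namespace TwoAtomLattice

open scoped NNReal ENNReal InnerProductSpace InnerProduct lp

universe u v

section Balanced

variable {A : Type*} [Ring A] [Algebra ℂ A]

/-- The elements `a` over which a bilinear form `φ` is balanced: `φ (x * a) y = φ x (a * y)`. -/
def balancedSubalgebra (φ : A →ₗ[ℂ] A →ₗ[ℂ] ℂ) : NonUnitalSubalgebra ℂ A where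
  carrier := {a | ∀ x y, φ (x * a) y = φ x (a * y)}
  add_mem' ha hb x y := by
    simp only [mul_add, add_mul, map_add, LinearMap.add_apply, ha x y, hb x y]
  zero_mem' x y := by simp
  mul_mem' {a b} ha hb x y := by rw [← mul_assoc, hb, ha, mul_assoc]
  smul_mem' c a ha x y := by
    simp only [mul_smul_comm, smul_mul_assoc, map_smul, LinearMap.smul_apply, ha x y]

lemma isClosed_balancedSubalgebra [TopologicalSpace A] [ContinuousMul A]
    {φ : A →ₗ[ℂ] A →ₗ[ℂ] ℂ}
    (hφ : Continuous fun p : A × A => φ p.1 p.2) : IsClosed (balancedSubalgebra φ : Set A) := by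
  have hset : (balancedSubalgebra φ : Set A) = ⋂ x, ⋂ y, {a | φ (x * a) y = φ x (a * y)} := by
    ext a
    simp only [Set.mem_iInter]
    rfl
  rw [hset]
  exact isClosed_iInter fun x => isClosed_iInter fun y => isClosed_eq
    (hφ.comp (by fun_prop : Continuous fun a => (x * a, y)))
    (hφ.comp (by fun_prop : Continuous fun a => (x, a * y)))

lemma mem_balancedSubalgebra_of_isIdempotentElem {φ : A →ₗ[ℂ] A →ₗ[ℂ] ℂ}
    (hφ : ∀ x y, x * y = 0 → φ x y = 0) {e : A} (he : IsIdempotentElem e) :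
    e ∈ balancedSubalgebra φ := fun x y => by
  have hleft : φ (x * e) (y - e * y) = 0 := hφ _ _ <| by
    rw [mul_assoc, mul_sub, ← mul_assoc e e, he.eq, sub_self, mul_zero]
  have hright : φ (x - x * e) (e * y) = 0 := hφ _ _ <| by
    rw [← mul_assoc, sub_mul, mul_assoc x e e, he.eq, sub_self, zero_mul]
  rw [map_sub, sub_eq_zero] at hleft
  rw [map_sub, LinearMap.sub_apply, sub_eq_zero] at hright
  rw [hleft, hright]

end Balanced

instance {A : Type*} [Semiring A] [Algebra ℂ A] [TopologicalSpace A] [ContinuousConstSMul ℂ A]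
    (S : Subalgebra ℂ A) : ContinuousConstSMul ℂ S :=
  ⟨fun c => (continuous_subtype_val.const_smul c).subtype_mk _⟩

section IdempotentHull

variable {A B : Type*} [Ring A] [Algebra ℂ A] [TopologicalSpace A] [IsTopologicalSemiring A]
  [ContinuousConstSMul ℂ A] [Ring B] [Algebra ℂ B] [TopologicalSpace B] [IsTopologicalSemiring B]
  [ContinuousConstSMul ℂ B]

variable (A) in
/-- The closed subalgebra of `A` generated by the idempotents of `A`. -/
def idempotentHull : NonUnitalSubalgebra ℂ A :=
  (NonUnitalAlgebra.adjoin ℂ {e : A | IsIdempotentElem e}).topologicalClosure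

lemma isClosed_idempotentHull : IsClosed (idempotentHull A : Set A) :=
  NonUnitalSubalgebra.isClosed_topologicalClosure _

lemma idempotentHull_le {S : NonUnitalSubalgebra ℂ A} (hS : IsClosed (S : Set A))
    (h : ∀ e : A, IsIdempotentElem e → e ∈ S) : idempotentHull A ≤ S :=
  NonUnitalSubalgebra.topologicalClosure_minimal (NonUnitalAlgebra.adjoin_le h) hS

lemma mem_idempotentHull_of_isIdempotentElem {e : A} (he : IsIdempotentElem e) :
    e ∈ idempotentHull A :=
  NonUnitalSubalgebra.le_topologicalClosure _ (NonUnitalAlgebra.subset_adjoin ℂ he)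

lemma map_mem_idempotentHull (f : A →ₙₐ[ℂ] B) (hf : Continuous f) {a : A}
    (ha : a ∈ idempotentHull A) : f a ∈ idempotentHull B := by
  have hle : idempotentHull A ≤ (idempotentHull B).comap f :=
    idempotentHull_le (isClosed_idempotentHull.preimage hf) fun _ he =>
      mem_idempotentHull_of_isIdempotentElem (he.map f)
  exact hle ha

lemma idempotentHull_eq_top_of_surjective (f : A →ₙₐ[ℂ] B) (hf : Continuous f)
    (hsurj : Function.Surjective f) (hA : idempotentHull A = ⊤) : idempotentHull B = ⊤ := by
  refine eq_top_iff.2 fun b _ => ?_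
  obtain ⟨a, rfl⟩ := hsurj b
  exact map_mem_idempotentHull f hf (hA ▸ trivial)

lemma idempotentHull_prod (hA : idempotentHull A = ⊤) (hB : idempotentHull B = ⊤) :
    idempotentHull (A × B) = ⊤ := by
  refine eq_top_iff.2 fun p _ => ?_
  rw [← Prod.fst_add_snd p]
  exact add_mem
    (map_mem_idempotentHull (NonUnitalAlgHom.inl ℂ A B) (by exact .prodMk_left 0) (hA ▸ trivial))
    (map_mem_idempotentHull (NonUnitalAlgHom.inr ℂ A B) (by exact .prodMk_right 0) (hB ▸ trivial))

theorem zeroProductDetermined_of_idempotentHull_eq_top (h : idempotentHull A = ⊤) :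
    ZeroProductDetermined A := by
  intro φ hcont hφ
  have hbal (x y : A) : φ x y = φ 1 (x * y) := by
    have hx : x ∈ balancedSubalgebra φ :=
      idempotentHull_le (isClosed_balancedSubalgebra hcont)
        (fun _ => mem_balancedSubalgebra_of_isIdempotentElem hφ) (h ▸ trivial)
    simpa only [one_mul] using hx 1 y
  exact ⟨⟨φ 1, hcont.comp (by fun_prop : Continuous fun a : A => ((1 : A), a))⟩, hbal⟩

end IdempotentHull

section OffDiagonalIdeal

variable {A : Type*} [Ring A]

variable (A) in
/-- The two-sided ideal generated by the off-diagonal corners `e * A * (1 - e)` of the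
idempotents `e` of `A`. -/
def offDiagonalIdeal : TwoSidedIdeal A :=
  TwoSidedIdeal.span {a | ∃ e x : A, IsIdempotentElem e ∧ e * x * (1 - e) = a}

lemma offDiagonal_mem_offDiagonalIdeal {e : A} (he : IsIdempotentElem e) (x : A) :
    e * x * (1 - e) ∈ offDiagonalIdeal A :=
  TwoSidedIdeal.subset_span ⟨e, x, he, rfl⟩

lemma mem_offDiagonalIdeal_of_mul_eq {e a : A} (he : IsIdempotentElem e) (hl : e * a = a)
    (hr : a * e = 0) : a ∈ offDiagonalIdeal A := by
  have := offDiagonal_mem_offDiagonalIdeal he a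
  rwa [hl, mul_sub, mul_one, hr, sub_zero] at this

lemma mem_offDiagonalIdeal_of_corners_eq_zero {e a : A} (he : IsIdempotentElem e)
    (h₁ : e * a * e = 0) (h₂ : (1 - e) * a * (1 - e) = 0) : a ∈ offDiagonalIdeal A := by
  have hsplit : a = e * a * (1 - e) + (1 - e) * a * (1 - (1 - e)) := by
    linear_combination (norm := noncomm_ring) h₁ + h₂
  rw [hsplit]
  exact add_mem (offDiagonal_mem_offDiagonalIdeal he a)
    (offDiagonal_mem_offDiagonalIdeal he.one_sub a)

lemma map_mem_offDiagonalIdeal {B F : Type*} [Ring B] [FunLike F A B]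
    [NonUnitalRingHomClass F A B] (f : F) {a : A} (ha : a ∈ offDiagonalIdeal A) :
    f a ∈ offDiagonalIdeal B := by
  have hle : offDiagonalIdeal A ≤ TwoSidedIdeal.comap f (offDiagonalIdeal B) := by
    refine TwoSidedIdeal.span_le.2 ?_
    rintro _ ⟨e, x, he, rfl⟩
    rw [SetLike.mem_coe, TwoSidedIdeal.mem_comap]
    convert offDiagonal_mem_offDiagonalIdeal (he.map f) (f x) using 1
    simp only [mul_sub, mul_one, map_sub, map_mul]
  exact TwoSidedIdeal.mem_comap f |>.1 (hle ha)

variable [Algebra ℂ A] [TopologicalSpace A] [IsTopologicalSemiring A] [ContinuousConstSMul ℂ A]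

lemma offDiagonal_mem_idempotentHull {e : A} (he : IsIdempotentElem e) (x : A) :
    e * x * (1 - e) ∈ idempotentHull A := by
  have hsum : IsIdempotentElem (e + e * x * (1 - e)) := by
    have hmul : e * e = e := he
    rw [IsIdempotentElem]
    simp only [mul_add, add_mul, mul_sub, sub_mul, mul_one, ← mul_assoc, hmul]
    simp only [mul_assoc, hmul]
    noncomm_ring
  simpa only [add_sub_cancel_left] using sub_mem (mem_idempotentHull_of_isIdempotentElem hsum)
    (mem_idempotentHull_of_isIdempotentElem he)

/-- Compressing `b` and `c` by `e` and `1 - e` writes `b * y * c`, for `y` off-diagonal, as a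
sum of four products of off-diagonal elements. -/
lemma mul_offDiagonal_mul_mem_idempotentHull {e : A} (he : IsIdempotentElem e) (b x c : A) :
    b * (e * x * (1 - e)) * c ∈ idempotentHull A := by
  have hmul : e * e = e := he
  have hcompl : (1 - e) * (1 - e) = 1 - e := he.one_sub
  have hl (x : A) : e * x * (1 - e) ∈ idempotentHull A := offDiagonal_mem_idempotentHull he x
  have hr (x : A) : (1 - e) * x * e ∈ idempotentHull A := by
    simpa only [sub_sub_cancel] using offDiagonal_mem_idempotentHull he.one_sub x
  have hsplit : b * (e * x * (1 - e)) * c =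
      e * (b * e * x) * (1 - e) * ((1 - e) * c * e) + e * (b * e * x * (1 - e) * c) * (1 - e) +
      (1 - e) * b * e * (e * x * (1 - e)) * ((1 - e) * c * e) +
      (1 - e) * b * e * (e * (x * (1 - e) * c) * (1 - e)) := by
    generalize he' : 1 - e = e' at *
    have hone : e + e' = 1 := by rw [← he', add_sub_cancel]
    calc b * (e * x * e') * c = (e + e') * (b * (e * x * e') * c) * (e + e') := by
          rw [hone, one_mul, mul_one]
      _ = e * (b * e * x) * (e' * e') * c * e + e * (b * e * x * e' * c) * e' +
          e' * b * (e * e) * x * (e' * e') * c * e + e' * b * (e * e) * x * e' * c * e' := by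
        rw [hmul, hcompl]
        noncomm_ring
      _ = _ := by noncomm_ring
  rw [hsplit]
  exact add_mem (add_mem (add_mem (mul_mem (hl _) (hr _)) (hl _))
    (mul_mem (mul_mem (hr _) (hl _)) (hr _))) (mul_mem (hr _) (hl _))

lemma mem_idempotentHull_of_mem_offDiagonalIdeal {a : A} (ha : a ∈ offDiagonalIdeal A) :
    a ∈ idempotentHull A := by
  have hstable (a : A) (ha : a ∈ offDiagonalIdeal A) : ∀ b c, b * a * c ∈ idempotentHull A := by
    induction ha using TwoSidedIdeal.span_induction with
    | mem a ha =>
      obtain ⟨e, x, he, rfl⟩ := ha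
      exact fun b c => mul_offDiagonal_mul_mem_idempotentHull he b x c
    | zero => exact fun b c => by simp only [mul_zero, zero_mul, zero_mem]
    | add x y _ _ hx hy =>
      intro b c
      rw [mul_add, add_mul]
      exact add_mem (hx b c) (hy b c)
    | neg x _ hx =>
      intro b c
      rw [mul_neg, neg_mul]
      exact neg_mem (hx b c)
    | left_absorb a x _ hx =>
      intro b c
      rw [← mul_assoc b a x]
      exact hx (b * a) c
    | right_absorb a x _ hx =>
      intro b c
      rw [← mul_assoc b x a, mul_assoc _ a c]
      exact hx b (a * c)
  simpa only [one_mul, mul_one] using hstable a ha 1 1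

lemma mem_idempotentHull_of_mul_mul_mem {e a : A} (he : 1 - e ∈ offDiagonalIdeal A)
    (h : e * a * e ∈ idempotentHull A) : a ∈ idempotentHull A := by
  have hsplit : a = e * a * e + ((1 - e) * a + e * a * (1 - e)) := by noncomm_ring
  rw [hsplit]
  exact add_mem h (mem_idempotentHull_of_mem_offDiagonalIdeal
    (add_mem (TwoSidedIdeal.mul_mem_right _ _ _ he) (TwoSidedIdeal.mul_mem_left _ _ _ he)))

lemma sum_mul_mul_sum_mem_idempotentHull {ι : Type*} [Fintype ι] {e : ι → A}
    (he : OrthogonalIdempotents e) (t : A) (ht : ∀ i, e i * t * e i ∈ idempotentHull A) :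
    (∑ i, e i) * t * ∑ i, e i ∈ idempotentHull A := by
  rw [Finset.sum_mul, Finset.sum_mul_sum]
  refine sum_mem fun i _ => sum_mem fun j _ => ?_
  rcases eq_or_ne i j with rfl | hij
  · exact ht i
  · refine mem_idempotentHull_of_mem_offDiagonalIdeal
      (mem_offDiagonalIdeal_of_mul_eq (he.idem i) ?_ ?_)
    · rw [← mul_assoc, ← mul_assoc, (he.idem i).eq]
    · rw [mul_assoc, he.ortho hij.symm, mul_zero]

end OffDiagonalIdeal

section WeightedComposition

variable {ι κ : Type*}

lemma two_toReal_pos : 0 < (2 : ℝ≥0∞).toReal := by norm_num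

lemma sum_norm_weighted_le {C : ℝ≥0} {c : κ → ℂ} (hc : ∀ j, ‖c j‖ ≤ C) (τ : κ ↪ ι)
    (x : ℓ²(ι, ℂ)) (s : Finset κ) :
    ∑ j ∈ s, ‖c j * x (τ j)‖ ^ (2 : ℝ≥0∞).toReal ≤ (C * ‖x‖) ^ (2 : ℝ≥0∞).toReal := by
  calc ∑ j ∈ s, ‖c j * x (τ j)‖ ^ (2 : ℝ≥0∞).toReal
      ≤ ∑ j ∈ s, (C : ℝ) ^ (2 : ℝ≥0∞).toReal * ‖x (τ j)‖ ^ (2 : ℝ≥0∞).toReal := by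
        refine Finset.sum_le_sum fun j _ => ?_
        rw [norm_mul, Real.mul_rpow (norm_nonneg _) (norm_nonneg _)]
        gcongr
        exact hc j
    _ = (C : ℝ) ^ (2 : ℝ≥0∞).toReal * ∑ i ∈ s.map τ, ‖x i‖ ^ (2 : ℝ≥0∞).toReal := by
        rw [Finset.sum_map, Finset.mul_sum]
    _ ≤ (C : ℝ) ^ (2 : ℝ≥0∞).toReal * ‖x‖ ^ (2 : ℝ≥0∞).toReal := by
        gcongr
        exact lp.sum_rpow_le_norm_rpow two_toReal_pos x _
    _ = (C * ‖x‖) ^ (2 : ℝ≥0∞).toReal := (Real.mul_rpow C.2 (norm_nonneg _)).symm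

/-- The weighted composition operator `x ↦ (c j * x (τ j))_j` with bounded weights `c`. -/
noncomputable def weightedComp (τ : κ ↪ ι) {c : κ → ℂ} {C : ℝ≥0} (hc : ∀ j, ‖c j‖ ≤ C) :
    ℓ²(ι, ℂ) →L[ℂ] ℓ²(κ, ℂ) :=
  LinearMap.mkContinuous
    { toFun x := ⟨fun j => c j * x (τ j), memℓp_gen' (sum_norm_weighted_le hc τ x)⟩
      map_add' x y := by
        ext j
        exact mul_add _ _ _
      map_smul' a x := by
        ext j
        exact mul_left_comm _ _ _ }
    C fun x => lp.norm_le_of_forall_sum_le two_toReal_pos (by positivity)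
      (sum_norm_weighted_le hc τ x)

variable {c : κ → ℂ} {C : ℝ≥0}

@[simp]
lemma weightedComp_apply (τ : κ ↪ ι) (hc : ∀ j, ‖c j‖ ≤ C) (x : ℓ²(ι, ℂ)) (j : κ) :
    weightedComp τ hc x j = c j * x (τ j) := rfl

lemma norm_weightedComp_le (τ : κ ↪ ι) (hc : ∀ j, ‖c j‖ ≤ C) : ‖weightedComp τ hc‖ ≤ C :=
  LinearMap.mkContinuous_norm_le _ C.2 _

/-- The diagonal operator with bounded entries `c`. -/
noncomputable abbrev diagonalOp (hc : ∀ j, ‖c j‖ ≤ C) : ℓ²(κ, ℂ) →L[ℂ] ℓ²(κ, ℂ) :=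
  weightedComp (.refl κ) hc

/-- The restriction operator `x ↦ x ∘ τ`. -/
noncomputable def pullback (τ : κ ↪ ι) : ℓ²(ι, ℂ) →L[ℂ] ℓ²(κ, ℂ) :=
  weightedComp τ (c := fun _ => 1) (C := 1) fun _ => norm_one.le

@[simp]
lemma pullback_apply (τ : κ ↪ ι) (x : ℓ²(ι, ℂ)) (j : κ) : pullback τ x j = x (τ j) :=
  one_mul _

/-- The projection of `ℓ²(ι, ℂ)` onto the coordinates in `s`. -/
noncomputable def coordProj (s : Set ι) : ℓ²(ι, ℂ) →L[ℂ] ℓ²(ι, ℂ) :=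
  diagonalOp (c := s.indicator 1) (C := 1) fun i => by
    simpa using norm_indicator_le_norm_self (1 : ι → ℂ) (s := s) i

lemma coordProj_apply_of_mem {s : Set ι} {i : ι} (hi : i ∈ s) (x : ℓ²(ι, ℂ)) :
    coordProj s x i = x i := by
  simp [coordProj, hi]

lemma coordProj_apply_of_notMem {s : Set ι} {i : ι} (hi : i ∉ s) (x : ℓ²(ι, ℂ)) :
    coordProj s x i = 0 := by
  simp [coordProj, hi]

@[simp]
lemma coordProj_apply (s : Set ι) [DecidablePred (· ∈ s)] (x : ℓ²(ι, ℂ)) (i : ι) :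
    coordProj s x i = if i ∈ s then x i else 0 := by
  split_ifs with hi
  · exact coordProj_apply_of_mem hi x
  · exact coordProj_apply_of_notMem hi x

end WeightedComposition

section MatrixEntries

variable {ι κ μ : Type*}

open Classical in
/-- The standard basis vector of `ℓ²(ι, ℂ)` at `i`. -/
noncomputable def unitVec (i : ι) : ℓ²(ι, ℂ) := lp.single 2 i 1

lemma unitVec_apply [DecidableEq ι] (i j : ι) : unitVec i j = if j = i then 1 else 0 := by
  rcases eq_or_ne j i with rfl | h <;> simp [unitVec, *]

lemma inner_unitVec_left (i : ι) (x : ℓ²(ι, ℂ)) : ⟪unitVec i, x⟫_ℂ = x i := by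
  classical
  rw [unitVec, lp.inner_single_left]
  simp

lemma norm_unitVec (i : ι) : ‖unitVec i‖ = 1 := by
  classical
  rw [unitVec, lp.norm_single (by norm_num), norm_one]

/-- The matrix entry `⟪unitVec i, T (unitVec j)⟫` of a bounded operator. -/
noncomputable def entry (T : ℓ²(κ, ℂ) →L[ℂ] ℓ²(ι, ℂ)) (i : ι) (j : κ) : ℂ := T (unitVec j) i

lemma ext_unitVec {F : Type*} [NormedAddCommGroup F] [NormedSpace ℂ F]
    {T T' : ℓ²(κ, ℂ) →L[ℂ] F} (h : ∀ j, T (unitVec j) = T' (unitVec j)) : T = T' := by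
  classical
  refine lp.ext_continuousLinearMap (by norm_num) fun j => ?_
  ext
  simpa [unitVec] using h j

lemma ext_entry {T T' : ℓ²(κ, ℂ) →L[ℂ] ℓ²(ι, ℂ)} (h : ∀ i j, entry T i j = entry T' i j) :
    T = T' :=
  ext_unitVec fun j => by
    ext i
    exact h i j

lemma norm_entry_le (T : ℓ²(κ, ℂ) →L[ℂ] ℓ²(ι, ℂ)) (i : ι) (j : κ) : ‖entry T i j‖ ≤ ‖T‖ :=
  calc ‖entry T i j‖ ≤ ‖T (unitVec j)‖ := lp.norm_apply_le_norm (by norm_num) _ _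
    _ ≤ ‖T‖ := by simpa only [norm_unitVec, mul_one] using T.le_opNorm (unitVec j)

@[simp]
lemma entry_sub (T T' : ℓ²(κ, ℂ) →L[ℂ] ℓ²(ι, ℂ)) (i : ι) (j : κ) :
    entry (T - T') i j = entry T i j - entry T' i j := rfl

lemma entry_adjoint (T : ℓ²(κ, ℂ) →L[ℂ] ℓ²(ι, ℂ)) (i : κ) (j : ι) :
    entry (T†) i j = starRingEnd ℂ (entry T j i) := by
  rw [entry, entry, ← inner_unitVec_left, ContinuousLinearMap.adjoint_inner_right,
    ← inner_conj_symm, inner_unitVec_left]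

lemma entry_weightedComp [DecidableEq ι] (τ : κ ↪ ι) {c : κ → ℂ} {C : ℝ≥0}
    (hc : ∀ j, ‖c j‖ ≤ C) (i : κ) (j : ι) :
    entry (weightedComp τ hc) i j = if τ i = j then c i else 0 := by
  rw [entry, weightedComp_apply, unitVec_apply, mul_ite, mul_one, mul_zero]

@[simp]
lemma entry_weightedComp_comp (τ : κ ↪ ι) {c : κ → ℂ} {C : ℝ≥0} (hc : ∀ j, ‖c j‖ ≤ C)
    (T : ℓ²(μ, ℂ) →L[ℂ] ℓ²(ι, ℂ)) (i : κ) (j : μ) :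
    entry (weightedComp τ hc ∘L T) i j = c i * entry T (τ i) j := rfl

lemma diagonalOp_unitVec {c : κ → ℂ} {C : ℝ≥0} (hc : ∀ j, ‖c j‖ ≤ C) (j : κ) :
    diagonalOp hc (unitVec j) = c j • unitVec j := by
  classical
  ext i
  simp only [weightedComp_apply, unitVec_apply, lp.coeFn_smul, Pi.smul_apply, smul_eq_mul,
    Function.Embedding.refl_apply]
  split_ifs with h <;> simp [h]

@[simp]
lemma entry_comp_diagonalOp {c : κ → ℂ} {C : ℝ≥0} (hc : ∀ j, ‖c j‖ ≤ C)
    (T : ℓ²(κ, ℂ) →L[ℂ] ℓ²(ι, ℂ)) (i : ι) (j : κ) :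
    entry (T ∘L diagonalOp hc) i j = entry T i j * c j := by
  rw [entry, ContinuousLinearMap.comp_apply, diagonalOp_unitVec, map_smul, mul_comm]
  rfl

end MatrixEntries

section Extension

variable {ι κ : Type*} (τ : κ ↪ ι)

/-- The isometric embedding `unitVec j ↦ unitVec (τ j)`, adjoint to `pullback τ`. -/
noncomputable def extendByZero : ℓ²(κ, ℂ) →L[ℂ] ℓ²(ι, ℂ) := (pullback τ)†

lemma extendByZero_unitVec (j : κ) : extendByZero τ (unitVec j) = unitVec (τ j) := by
  classical
  ext i
  change entry ((pullback τ)†) i j = _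
  rw [entry_adjoint, entry, pullback_apply, unitVec_apply, unitVec_apply, apply_ite (starRingEnd ℂ),
    map_one, map_zero]
  simp only [eq_comm]

@[simp]
lemma entry_comp_extendByZero {μ : Type*} (T : ℓ²(ι, ℂ) →L[ℂ] ℓ²(μ, ℂ)) (i : μ) (j : κ) :
    entry (T ∘L extendByZero τ) i j = entry T i (τ j) := by
  rw [entry, ContinuousLinearMap.comp_apply, extendByZero_unitVec, entry]

lemma pullback_comp_extendByZero : pullback τ ∘L extendByZero τ = .id ℂ _ := by
  classical
  refine ext_entry fun i j => ?_
  simp [entry, unitVec_apply, extendByZero_unitVec]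

lemma extendByZero_comp_pullback : extendByZero τ ∘L pullback τ = coordProj (Set.range τ) := by
  classical
  refine ext_unitVec fun i => ?_
  ext k
  by_cases hi : ∃ j, τ j = i
  · obtain ⟨j, rfl⟩ := hi
    have hj : pullback τ (unitVec (τ j)) = unitVec j := by
      rw [← extendByZero_unitVec]
      exact DFunLike.congr_fun (pullback_comp_extendByZero τ) (unitVec j)
    rw [ContinuousLinearMap.comp_apply, hj, extendByZero_unitVec, coordProj_apply, unitVec_apply]
    split_ifs with h h' <;> simp_all
  · have hzero : pullback τ (unitVec i) = 0 := by
      ext j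
      simpa [unitVec_apply] using fun h => hi ⟨j, h⟩
    rw [ContinuousLinearMap.comp_apply, hzero, map_zero, coordProj_apply, unitVec_apply]
    split_ifs with h h' <;> simp_all

end Extension

section Intertwiner

variable {R : Type*} [Ring R] [Algebra ℂ R]

/-- The algebra of pairs `(z, d)` that `S` intertwines: `d * S = S * z`. -/
def intertwinerAlgebra (S : R) : Subalgebra ℂ (R × R) where
  carrier := {p | p.2 * S = S * p.1}
  mul_mem' {p q} hp hq := by
    change p.2 * q.2 * S = S * (p.1 * q.1)
    rw [mul_assoc, hq, ← mul_assoc, hp, mul_assoc]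
  add_mem' {p q} hp hq := by
    change (p.2 + q.2) * S = S * (p.1 + q.1)
    rw [add_mul, mul_add, hp, hq]
  algebraMap_mem' r := Algebra.commutes r S

lemma mem_intertwinerAlgebra {S : R} {p : R × R} :
    p ∈ intertwinerAlgebra S ↔ p.2 * S = S * p.1 := Iff.rfl

end Intertwiner

section Weight

variable {ι : Type*}

/-- The weights `4 ^ (-ℓ i)` attached to a level function `ℓ`. -/
noncomputable def weight (ℓ : ι → ℕ) (i : ι) : ℂ := (1 / 4) ^ ℓ i

lemma weight_ne_zero (ℓ : ι → ℕ) (i : ι) : weight ℓ i ≠ 0 := by simp [weight]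

lemma norm_weight (ℓ : ι → ℕ) (i : ι) : ‖weight ℓ i‖ = (1 / 4) ^ ℓ i := by simp [weight]

lemma norm_weight_le_one (ℓ : ι → ℕ) (i : ι) : ‖weight ℓ i‖ ≤ (1 : ℝ≥0) := by
  rw [norm_weight]
  exact pow_le_one₀ (by norm_num) (by norm_num)

lemma star_weight (ℓ : ι → ℕ) (i : ι) : starRingEnd ℂ (weight ℓ i) = weight ℓ i := by
  simp [weight, map_ofNat]

/-- The diagonal operator with entries `weight ℓ i`. -/
noncomputable def weightOp (ℓ : ι → ℕ) : ℓ²(ι, ℂ) →L[ℂ] ℓ²(ι, ℂ) :=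
  diagonalOp (norm_weight_le_one ℓ)

lemma weightOp_apply (ℓ : ι → ℕ) (x : ℓ²(ι, ℂ)) (i : ι) : weightOp ℓ x i = weight ℓ i * x i := rfl

/-- The pairs of operators intertwined by `weightOp ℓ`. -/
noncomputable abbrev LevelAlgebra (ℓ : ι → ℕ) :
    Subalgebra ℂ ((ℓ²(ι, ℂ) →L[ℂ] ℓ²(ι, ℂ)) × (ℓ²(ι, ℂ) →L[ℂ] ℓ²(ι, ℂ))) :=
  intertwinerAlgebra (weightOp ℓ)

end Weight

section Coefficients

variable {ι : Type*} {ℓ : ι → ℕ}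

lemma mem_levelAlgebra_iff {p : (ℓ²(ι, ℂ) →L[ℂ] ℓ²(ι, ℂ)) × (ℓ²(ι, ℂ) →L[ℂ] ℓ²(ι, ℂ))} :
    p ∈ LevelAlgebra ℓ ↔
      ∀ i j, entry p.2 i j * weight ℓ j = weight ℓ i * entry p.1 i j := by
  constructor
  · intro h i j
    have := congrArg (entry · i j) (mem_intertwinerAlgebra.1 h)
    simpa [ContinuousLinearMap.mul_def, weightOp] using this
  · exact fun h => ext_entry fun i j => by
      simpa [ContinuousLinearMap.mul_def, weightOp] using h i j

/-- The matrix entries of the second component of `a`; they determine `a`. -/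
noncomputable def coeff (a : LevelAlgebra ℓ) (i j : ι) : ℂ := entry a.1.2 i j

lemma coeff_mul_weight (a : LevelAlgebra ℓ) (i j : ι) :
    coeff a i j * weight ℓ j = weight ℓ i * entry a.1.1 i j :=
  mem_levelAlgebra_iff.1 a.2 i j

lemma ext_coeff {a b : LevelAlgebra ℓ} (h : ∀ i j, coeff a i j = coeff b i j) : a = b := by
  refine Subtype.ext (Prod.ext (ext_entry fun i j => ?_) (ext_entry h))
  rw [← mul_right_inj' (weight_ne_zero ℓ i), ← coeff_mul_weight, ← coeff_mul_weight, h]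

@[simp]
lemma coeff_zero (i j : ι) : coeff (0 : LevelAlgebra ℓ) i j = 0 := rfl

@[simp]
lemma coeff_sub (a b : LevelAlgebra ℓ) (i j : ι) :
    coeff (a - b) i j = coeff a i j - coeff b i j := rfl

@[simp]
lemma coeff_smul (c : ℂ) (a : LevelAlgebra ℓ) (i j : ι) : coeff (c • a) i j = c * coeff a i j := rfl

@[simp]
lemma coeff_sum {α : Type*} (s : Finset α) (a : α → LevelAlgebra ℓ) (i j : ι) :
    coeff (∑ k ∈ s, a k) i j = ∑ k ∈ s, coeff (a k) i j :=
  map_sum (⟨⟨fun a => coeff a i j, rfl⟩, fun _ _ => rfl⟩ : LevelAlgebra ℓ →+ ℂ) a s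

lemma coeff_one [DecidableEq ι] (i j : ι) :
    coeff (1 : LevelAlgebra ℓ) i j = if i = j then 1 else 0 :=
  unitVec_apply j i

variable {c : ι → ℂ} {C : ℝ≥0}

/-- A weighted composition operator along a level-preserving map commutes with `weightOp ℓ`, and so
lies diagonally in `LevelAlgebra ℓ`. -/
noncomputable def levelComp (τ : ι ↪ ι) (hc : ∀ i, ‖c i‖ ≤ C) (hτ : ∀ i, ℓ (τ i) = ℓ i) :
    LevelAlgebra ℓ :=
  ⟨(weightedComp τ hc, weightedComp τ hc), mem_intertwinerAlgebra.2 <| by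
    ext x i
    change c i * (weight ℓ (τ i) * x (τ i)) = weight ℓ i * (c i * x (τ i))
    rw [weight, hτ, weight]
    ring⟩

variable (ℓ) in
/-- The diagonal operators, as elements of `LevelAlgebra ℓ`. -/
noncomputable abbrev levelDiagonal (hc : ∀ i, ‖c i‖ ≤ C) : LevelAlgebra ℓ :=
  levelComp (.refl ι) hc fun _ => rfl

@[simp]
lemma coeff_levelDiagonal_mul (hc : ∀ i, ‖c i‖ ≤ C) (a : LevelAlgebra ℓ) (i j : ι) :
    coeff (levelDiagonal ℓ hc * a) i j = c i * coeff a i j := rfl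

@[simp]
lemma coeff_mul_levelDiagonal (a : LevelAlgebra ℓ) (hc : ∀ i, ‖c i‖ ≤ C) (i j : ι) :
    coeff (a * levelDiagonal ℓ hc) i j = coeff a i j * c j :=
  entry_comp_diagonalOp hc _ i j

lemma coeff_levelDiagonal [DecidableEq ι] (hc : ∀ i, ‖c i‖ ≤ C) (i j : ι) :
    coeff (levelDiagonal ℓ hc) i j = if i = j then c i else 0 :=
  entry_weightedComp _ hc _ _

lemma norm_levelDiagonal_le (hc : ∀ i, ‖c i‖ ≤ C) : ‖(levelDiagonal ℓ hc).1‖ ≤ C :=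
  max_le (norm_weightedComp_le _ hc) (norm_weightedComp_le _ hc)

variable (ℓ) in
/-- The coordinate projections, as elements of `LevelAlgebra ℓ`. -/
noncomputable def levelProj (s : Set ι) : LevelAlgebra ℓ :=
  levelDiagonal ℓ (c := s.indicator 1) (C := 1) fun i => by
    simpa using norm_indicator_le_norm_self (1 : ι → ℂ) (s := s) i

lemma levelProj_fst (s : Set ι) : (levelProj ℓ s).1.1 = coordProj s := rfl

@[simp]
lemma levelProj_snd (s : Set ι) : (levelProj ℓ s).1.2 = coordProj s := rfl

@[simp]
lemma coeff_levelProj_mul (s : Set ι) [DecidablePred (· ∈ s)] (a : LevelAlgebra ℓ) (i j : ι) :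
    coeff (levelProj ℓ s * a) i j = if i ∈ s then coeff a i j else 0 := by
  simp [levelProj, Set.indicator_apply]

@[simp]
lemma coeff_mul_levelProj (s : Set ι) [DecidablePred (· ∈ s)] (a : LevelAlgebra ℓ) (i j : ι) :
    coeff (a * levelProj ℓ s) i j = if j ∈ s then coeff a i j else 0 := by
  simp [levelProj, Set.indicator_apply]

lemma coeff_levelProj [DecidableEq ι] (s : Set ι) [DecidablePred (· ∈ s)] (i j : ι) :
    coeff (levelProj ℓ s) i j = if i = j ∧ i ∈ s then 1 else 0 := by
  rw [levelProj, coeff_levelDiagonal, Set.indicator_apply, ← ite_and, Pi.one_apply]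

lemma isIdempotentElem_levelProj (s : Set ι) : IsIdempotentElem (levelProj ℓ s) := by
  classical
  refine ext_coeff fun i j => ?_
  rw [coeff_levelProj_mul, coeff_levelProj]
  split_ifs with h h' <;> grind

lemma one_sub_levelProj (s : Set ι) : 1 - levelProj ℓ s = levelProj ℓ sᶜ := by
  classical
  refine ext_coeff fun i j => ?_
  rw [coeff_sub, coeff_one, coeff_levelProj, coeff_levelProj]
  simp only [Set.mem_compl_iff]
  split_ifs <;> grind

lemma mem_offDiagonalIdeal_of_coeff_eq_zero {a : LevelAlgebra ℓ} (s : Set ι)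
    (h : ∀ i j, (i ∈ s ↔ j ∈ s) → coeff a i j = 0) : a ∈ offDiagonalIdeal (LevelAlgebra ℓ) := by
  classical
  refine mem_offDiagonalIdeal_of_corners_eq_zero (isIdempotentElem_levelProj s) ?_ ?_
  all_goals
    refine ext_coeff fun i j => ?_
    simp only [one_sub_levelProj, coeff_mul_levelProj, coeff_levelProj_mul, coeff_zero,
      Set.mem_compl_iff]
    split_ifs
    all_goals first | rfl | exact h i j (by tauto)

end Coefficients

section LevelInvolution

variable {ι : Type*} {ℓ : ι → ℕ}

/-- Off its fixed points, an involution exchanges `{i | i < τ i}` and `{i | τ i < i}`. -/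
lemma levelProj_moved_mem_offDiagonalIdeal {τ : Equiv.Perm ι} (hτ : Function.Involutive τ)
    (hℓ : ∀ i, ℓ (τ i) = ℓ i) : levelProj ℓ {i | τ i ≠ i} ∈ offDiagonalIdeal (LevelAlgebra ℓ) := by
  classical
  let _ : LinearOrder ι := linearOrderOfSTO WellOrderingRel
  let flip : LevelAlgebra ℓ :=
    levelComp τ.toEmbedding (c := fun _ => 1) (C := 1) (fun _ => norm_one.le) hℓ
  have hflip (a : LevelAlgebra ℓ) (i j : ι) : coeff (flip * a) i j = coeff a (τ i) j :=
    one_mul _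
  have hmem : flip * levelProj ℓ {i | τ i ≠ i} ∈ offDiagonalIdeal (LevelAlgebra ℓ) := by
    refine mem_offDiagonalIdeal_of_coeff_eq_zero {i | i < τ i} fun i j hij => ?_
    rw [hflip, coeff_levelProj, if_neg]
    rintro ⟨rfl, hne⟩
    simp only [Set.mem_ofPred_eq, hτ i, ne_eq] at hij hne
    rcases lt_trichotomy i (τ i) with h | h | h
    · exact (hij.1 h).asymm h
    · exact hne h
    · exact (hij.2 h).asymm h
  have hfactor : levelProj ℓ {i | τ i ≠ i} = flip * (flip * levelProj ℓ {i | τ i ≠ i}) :=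
    ext_coeff fun i j => by rw [hflip, hflip, hτ i]
  rw [hfactor]
  exact TwoSidedIdeal.mul_mem_left _ _ _ hmem

lemma exists_involutive_fixedPoints_subsingleton (X : Type*) :
    ∃ τ : Equiv.Perm X, Function.Involutive τ ∧ (Function.fixedPoints τ).Subsingleton := by
  rcases finite_or_infinite X with hX | hX
  · obtain ⟨n, ⟨e⟩⟩ := Finite.exists_equiv_fin X
    refine ⟨e.symm.permCongr Fin.revPerm, fun i => by simp, fun i hi j hj => e.injective ?_⟩
    have hfix {i : X} (hi : i ∈ Function.fixedPoints (e.symm.permCongr Fin.revPerm)) :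
        (e i).rev = e i := by
      simpa [Function.IsFixedPt, Equiv.symm_apply_eq] using hi
    have := congrArg Fin.val (hfix hi)
    have := congrArg Fin.val (hfix hj)
    simp only [Fin.val_rev] at *
    omega
  · obtain ⟨e⟩ : Nonempty (X ≃ X ⊕ X) := by
      rw [← Cardinal.eq]
      simp [Cardinal.add_eq_self (Cardinal.aleph0_le_mk X)]
    refine ⟨e.symm.permCongr (Equiv.sumComm X X), fun i => by simp, fun i hi => ?_⟩
    have hfix : (e i).swap = e i := by
      simpa [Function.IsFixedPt, Equiv.symm_apply_eq] using hi
    rcases h : e i with x | x <;> simp [h] at hfix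

lemma exists_level_involution (ℓ : ι → ℕ) : ∃ τ : Equiv.Perm ι, Function.Involutive τ ∧
    (∀ i, ℓ (τ i) = ℓ i) ∧ Set.InjOn ℓ (Function.fixedPoints τ) := by
  choose t ht hfix using fun n : ℕ => exists_involutive_fixedPoints_subsingleton {i : ι // ℓ i = n}
  let e := Equiv.sigmaFiberEquiv ℓ
  have hτ (n : ℕ) (x : {i // ℓ i = n}) : e.permCongr (Equiv.sigmaCongrRight t) x = t n x := by
    obtain ⟨i, rfl⟩ := x
    rfl
  have hfiber (i : ι) : e.permCongr (Equiv.sigmaCongrRight t) i = t (ℓ i) ⟨i, rfl⟩ :=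
    hτ (ℓ i) ⟨i, rfl⟩
  refine ⟨e.permCongr (Equiv.sigmaCongrRight t), fun i => ?_, fun i => ?_, fun i hi j hj hij => ?_⟩
  · rw [hfiber i, hτ, ht]
  · rw [hfiber]
    exact (t (ℓ i) ⟨i, rfl⟩).2
  · rw [Function.mem_fixedPoints, Function.IsFixedPt] at hi hj
    refine congrArg Subtype.val (hfix (ℓ i) (Subtype.ext ?_ : _ = (⟨i, rfl⟩ : {k // ℓ k = ℓ i}))
      (Subtype.ext ?_ : _ = (⟨j, hij.symm⟩ : {k // ℓ k = ℓ i})))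
    · rw [← hτ, hi]
    · rw [← hτ, hj]

lemma exists_levelProj_compl_mem_offDiagonalIdeal (ℓ : ι → ℕ) :
    ∃ s : Set ι, Set.InjOn ℓ s ∧ levelProj ℓ sᶜ ∈ offDiagonalIdeal (LevelAlgebra ℓ) := by
  obtain ⟨τ, hτ, hℓ, hinj⟩ := exists_level_involution ℓ
  exact ⟨Function.fixedPoints τ, hinj, levelProj_moved_mem_offDiagonalIdeal hτ hℓ⟩

lemma exists_strictMono_level {s : Set ι} (hs : s.Infinite) (hinj : Set.InjOn ℓ s) :
    ∃ f : ℕ ↪ ι, Set.range f = s ∧ StrictMono (ℓ ∘ f) := by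
  have : Infinite (ℓ '' s) := (hs.image hinj).to_subtype
  let e : ℕ ≃o ℓ '' s := Nat.Subtype.orderIsoOfNat (ℓ '' s)
  choose g hgs hg using fun n => (e n).2
  have hmono : StrictMono (ℓ ∘ g) := fun m n hmn => by
    rw [Function.comp_apply, Function.comp_apply, hg, hg]
    exact e.strictMono hmn
  refine ⟨⟨g, hmono.injective.of_comp⟩, Set.Subset.antisymm (Set.range_subset_iff.2 hgs) ?_, hmono⟩
  intro i hi
  obtain ⟨n, hn⟩ := e.surjective ⟨ℓ i, i, hi, rfl⟩
  exact ⟨n, hinj (hgs n) hi (by rw [hg, hn])⟩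

end LevelInvolution

section LevelCorner

variable {ι κ : Type*} {ℓ : ι → ℕ}

lemma weightOp_comp_extendByZero (f : κ ↪ ι) :
    weightOp ℓ ∘L extendByZero f = extendByZero f ∘L weightOp (ℓ ∘ f) := by
  refine ext_unitVec fun j => ?_
  simp only [ContinuousLinearMap.comp_apply, weightOp, extendByZero_unitVec, diagonalOp_unitVec,
    map_smul]
  rfl

lemma pullback_comp_weightOp (f : κ ↪ ι) :
    pullback f ∘L weightOp ℓ = weightOp (ℓ ∘ f) ∘L pullback f := by
  ext x j
  simp only [ContinuousLinearMap.comp_apply, pullback_apply, weightOp_apply]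
  rfl

lemma pullback_extendByZero_apply (f : κ ↪ ι) (x : ℓ²(κ, ℂ)) :
    pullback f (extendByZero f x) = x :=
  DFunLike.congr_fun (pullback_comp_extendByZero f) x

variable (ℓ) in
/-- The corner inclusion induced by an injection `f` of index sets. -/
noncomputable def levelCorner (f : κ ↪ ι) : LevelAlgebra (ℓ ∘ f) →ₙₐ[ℂ] LevelAlgebra ℓ where
  toFun a := ⟨(extendByZero f ∘L a.1.1 ∘L pullback f, extendByZero f ∘L a.1.2 ∘L pullback f),
    mem_intertwinerAlgebra.2 <| by
      have ha := mem_intertwinerAlgebra.1 a.2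
      rw [ContinuousLinearMap.mul_def] at ha ⊢
      calc (extendByZero f ∘L a.1.2 ∘L pullback f) ∘L weightOp ℓ
          = extendByZero f ∘L (a.1.2 ∘L weightOp (ℓ ∘ f)) ∘L pullback f := by
            rw [ContinuousLinearMap.comp_assoc, ContinuousLinearMap.comp_assoc,
              pullback_comp_weightOp, ContinuousLinearMap.comp_assoc]
        _ = (extendByZero f ∘L weightOp (ℓ ∘ f)) ∘L a.1.1 ∘L pullback f := by rw [ha]; rfl
        _ = weightOp ℓ * (extendByZero f ∘L a.1.1 ∘L pullback f) := by
            rw [← weightOp_comp_extendByZero]; rfl⟩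
  map_smul' c a := by
    refine Subtype.ext (Prod.ext ?_ ?_) <;> ext1 _ <;> exact map_smul (extendByZero f) c _
  map_zero' := by
    refine Subtype.ext (Prod.ext ?_ ?_) <;> ext1 _ <;> exact map_zero (extendByZero f)
  map_add' a b := by
    refine Subtype.ext (Prod.ext ?_ ?_) <;> ext1 _ <;> exact map_add (extendByZero f) _ _
  map_mul' a b := by
    refine Subtype.ext (Prod.ext ?_ ?_) <;> ext1 _
    · exact congrArg (extendByZero f ∘L a.1.1) (pullback_extendByZero_apply f _).symm
    · exact congrArg (extendByZero f ∘L a.1.2) (pullback_extendByZero_apply f _).symm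

lemma levelCorner_snd (f : κ ↪ ι) (a : LevelAlgebra (ℓ ∘ f)) :
    (levelCorner ℓ f a).1.2 = extendByZero f ∘L a.1.2 ∘L pullback f := rfl

lemma continuous_levelCorner (f : κ ↪ ι) : Continuous (levelCorner ℓ f) := by
  have hcomp : Continuous fun T : ℓ²(κ, ℂ) →L[ℂ] ℓ²(κ, ℂ) =>
      extendByZero f ∘L T ∘L pullback f := by fun_prop
  exact (((hcomp.comp continuous_fst).prodMk (hcomp.comp continuous_snd)).comp
    continuous_subtype_val).subtype_mk _

lemma exists_levelCorner_eq (f : κ ↪ ι) (a : LevelAlgebra ℓ) :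
    ∃ b, levelCorner ℓ f b = levelProj ℓ (Set.range f) * a * levelProj ℓ (Set.range f) := by
  have ha := mem_intertwinerAlgebra.1 a.2
  rw [ContinuousLinearMap.mul_def] at ha
  refine ⟨⟨(pullback f ∘L a.1.1 ∘L extendByZero f, pullback f ∘L a.1.2 ∘L extendByZero f),
    mem_intertwinerAlgebra.2 ?_⟩, Subtype.ext (Prod.ext ?_ ?_)⟩
  · calc (pullback f ∘L a.1.2 ∘L extendByZero f) * weightOp (ℓ ∘ f)
        = pullback f ∘L a.1.2 ∘L (extendByZero f ∘L weightOp (ℓ ∘ f)) := rfl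
      _ = pullback f ∘L (a.1.2 ∘L weightOp ℓ) ∘L extendByZero f := by
          rw [← weightOp_comp_extendByZero]; rfl
      _ = (pullback f ∘L weightOp ℓ) ∘L a.1.1 ∘L extendByZero f := by rw [ha]; rfl
      _ = weightOp (ℓ ∘ f) * (pullback f ∘L a.1.1 ∘L extendByZero f) := by
          rw [pullback_comp_weightOp]; rfl
  · change _ = coordProj _ ∘L a.1.1 ∘L coordProj _
    rw [← extendByZero_comp_pullback]
    rfl
  · change _ = coordProj _ ∘L a.1.2 ∘L coordProj _
    rw [← extendByZero_comp_pullback]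
    rfl

lemma levelProj_range_mul_mul_mem_idempotentHull (f : κ ↪ ι)
    (h : idempotentHull (LevelAlgebra (ℓ ∘ f)) = ⊤) (a : LevelAlgebra ℓ) :
    levelProj ℓ (Set.range f) * a * levelProj ℓ (Set.range f) ∈
      idempotentHull (LevelAlgebra ℓ) := by
  obtain ⟨b, hb⟩ := exists_levelCorner_eq f a
  exact hb ▸ map_mem_idempotentHull _ (continuous_levelCorner f) (h ▸ trivial)

end LevelCorner

section Diagonal

variable {ι : Type*} {ℓ : ι → ℕ} {c : ι → ℂ} {C : ℝ≥0}

lemma levelDiagonal_mem_idempotentHull_of_finite_range (hc : ∀ i, ‖c i‖ ≤ C)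
    (hfin : (Set.range c).Finite) : levelDiagonal ℓ hc ∈ idempotentHull (LevelAlgebra ℓ) := by
  classical
  have hsum : levelDiagonal ℓ hc = ∑ z ∈ hfin.toFinset, z • levelProj ℓ (c ⁻¹' {z}) := by
    refine ext_coeff fun i j => ?_
    simp only [coeff_levelDiagonal, coeff_sum, coeff_smul, coeff_levelProj, Set.mem_preimage,
      Set.mem_singleton_iff]
    rw [Finset.sum_eq_single (c i) (by grind) (by simp)]
    simp
  rw [hsum]
  exact sum_mem fun z _ => SMulMemClass.smul_mem z
    (mem_idempotentHull_of_isIdempotentElem (isIdempotentElem_levelProj _))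

/-- Bounded diagonals are uniform limits of diagonals with finitely many values. -/
lemma levelDiagonal_mem_idempotentHull (hc : ∀ i, ‖c i‖ ≤ C) :
    levelDiagonal ℓ hc ∈ idempotentHull (LevelAlgebra ℓ) := by
  refine isClosed_idempotentHull.closure_subset (Metric.mem_closure_iff.2 fun ε hε => ?_)
  obtain ⟨t, -, ht, hcover⟩ :=
    finite_cover_balls_of_compact (isCompact_closedBall (0 : ℂ) C) (half_pos hε)
  have happrox (i : ι) : ∃ z ∈ t, ‖c i - z‖ < ε / 2 := by
    simpa [dist_eq_norm] using hcover (mem_closedBall_zero_iff.2 (hc i))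
  choose g hgt hg using happrox
  have hfin : (Set.range g).Finite := ht.subset (Set.range_subset_iff.2 hgt)
  obtain ⟨B, hB⟩ := hfin.isBounded.exists_norm_le
  have hgB (i : ι) : ‖g i‖ ≤ B.toNNReal :=
    (hB _ ⟨i, rfl⟩).trans (Real.le_coe_toNNReal B)
  have hdiff (i : ι) : ‖c i - g i‖ ≤ (ε / 2).toNNReal :=
    (hg i).le.trans (Real.le_coe_toNNReal _)
  refine ⟨_, levelDiagonal_mem_idempotentHull_of_finite_range hgB hfin, ?_⟩
  have hsub : levelDiagonal ℓ hc - levelDiagonal ℓ hgB = levelDiagonal ℓ hdiff := by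
    classical
    refine ext_coeff fun i j => ?_
    simp only [coeff_sub, coeff_levelDiagonal]
    split_ifs <;> simp
  calc dist (levelDiagonal ℓ hc) (levelDiagonal ℓ hgB) = ‖(levelDiagonal ℓ hdiff).1‖ := by
        rw [Subtype.dist_eq, dist_eq_norm, ← hsub]
        rfl
    _ ≤ (ε / 2).toNNReal := norm_levelDiagonal_le hdiff
    _ = ε / 2 := Real.coe_toNNReal _ (half_pos hε).le
    _ < ε := half_lt_self hε

end Diagonal

section WeightedUpperPart

variable {ℓ : ℕ → ℕ}

lemma norm_weight_div_le (hℓ : StrictMono ℓ) (n k : ℕ) :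
    ‖weight ℓ (n + k) / weight ℓ n‖ ≤ (1 / 4) ^ k := by
  have hle : k + ℓ n ≤ ℓ (n + k) := add_comm k n ▸ hℓ.add_le_nat k n
  rw [norm_div, norm_weight, norm_weight, div_le_iff₀ (by positivity), ← pow_add]
  exact pow_le_pow_of_le_one (by norm_num) (by norm_num) hle

/-- The `k`-th superdiagonal of `Z` is at most `‖T‖ * 4 ^ (-k)`, so `Z` is an absolutely convergent
sum of weighted shifts. -/
lemma exists_weighted_upper_part (hℓ : StrictMono ℓ) (T : ℓ²(ℕ, ℂ) →L[ℂ] ℓ²(ℕ, ℂ)) :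
    ∃ Z : ℓ²(ℕ, ℂ) →L[ℂ] ℓ²(ℕ, ℂ), ∀ n m,
      weight ℓ n * entry Z n m = if n ≤ m then entry T n m * weight ℓ m else 0 := by
  let c (k n : ℕ) : ℂ := entry T n (n + k) * (weight ℓ (n + k) / weight ℓ n)
  have hc (k n : ℕ) : ‖c k n‖ ≤ (‖T‖₊ * (1 / 4) ^ k : ℝ≥0) := by
    push_cast
    rw [norm_mul]
    gcongr
    · exact norm_entry_le T _ _
    · exact norm_weight_div_le hℓ n k
  let D (k : ℕ) : ℓ²(ℕ, ℂ) →L[ℂ] ℓ²(ℕ, ℂ) := weightedComp (addRightEmbedding k) (hc k)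
  have hD : Summable D := by
    refine Summable.of_norm_bounded (g := fun k => ‖T‖ * (1 / 4) ^ k)
      ((summable_geometric_of_lt_one (by norm_num) (by norm_num)).mul_left _) fun k => ?_
    exact (norm_weightedComp_le (addRightEmbedding k) (hc k)).trans_eq (by push_cast; rfl)
  refine ⟨∑' k, D k, fun n m => ?_⟩
  have hentry : HasSum (fun k => entry (D k) n m) (entry (∑' k, D k) n m) :=
    hD.hasSum.mapL ((lp.evalCLM ℂ (fun _ : ℕ => ℂ) 2 n) ∘L
      ContinuousLinearMap.apply ℂ ℓ²(ℕ, ℂ) (unitVec m))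
  have hDk (k : ℕ) : entry (D k) n m = if n + k = m then c k n else 0 :=
    entry_weightedComp _ _ _ _
  simp only [hDk] at hentry
  have hn := weight_ne_zero ℓ n
  split_ifs with hnm
  · obtain ⟨k, rfl⟩ := Nat.exists_eq_add_of_le hnm
    have hsingle : HasSum (fun k' => if n + k' = n + k then c k' n else 0) (c k n) := by
      convert hasSum_single k fun k' hk' => ?_ using 1
      · exact (if_pos rfl).symm
      · exact if_neg (by omega)
    rw [hentry.unique hsingle]
    simp only [c]
    field_simp
  · have hzero : HasSum (fun k => if n + k = m then c k n else 0) 0 := by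
      convert hasSum_zero using 2 with k
      exact if_neg (by omega)
    rw [hentry.unique hzero, mul_zero]

end WeightedUpperPart

section LevelAdjoint

variable {ι : Type*} {ℓ : ι → ℕ}

/-- The conjugate-linear anti-automorphism `(z, d) ↦ (d†, z†)` of `LevelAlgebra ℓ`, which exchanges
upper and lower triangular elements. -/
noncomputable def levelAdjoint (a : LevelAlgebra ℓ) : LevelAlgebra ℓ :=
  ⟨((a.1.2)†, (a.1.1)†), mem_levelAlgebra_iff.2 fun i j => by
    have := congrArg (starRingEnd ℂ) (coeff_mul_weight a j i)
    simp only [map_mul, star_weight] at this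
    rw [entry_adjoint, entry_adjoint, mul_comm, ← this, mul_comm]
    rfl⟩

lemma levelAdjoint_levelAdjoint (a : LevelAlgebra ℓ) : levelAdjoint (levelAdjoint a) = a :=
  Subtype.ext <| Prod.ext (ContinuousLinearMap.adjoint_adjoint _)
    (ContinuousLinearMap.adjoint_adjoint _)

lemma levelAdjoint_mul (a b : LevelAlgebra ℓ) :
    levelAdjoint (a * b) = levelAdjoint b * levelAdjoint a :=
  Subtype.ext <| Prod.ext (ContinuousLinearMap.adjoint_comp _ _)
    (ContinuousLinearMap.adjoint_comp _ _)

lemma coeff_levelAdjoint_eq_zero {a : LevelAlgebra ℓ} {i j : ι} (h : coeff a j i = 0) :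
    coeff (levelAdjoint a) i j = 0 := by
  have hz : entry a.1.1 j i = 0 := by
    have := coeff_mul_weight a j i
    rw [h, zero_mul, eq_comm] at this
    exact (mul_eq_zero.1 this).resolve_left (weight_ne_zero ℓ j)
  change entry ((a.1.1)†) i j = 0
  rw [entry_adjoint, hz, map_zero]

end LevelAdjoint

section Triangular

variable {ℓ : ℕ → ℕ}

lemma exists_lift_of_upperTriangular (hℓ : StrictMono ℓ) {T : ℓ²(ℕ, ℂ) →L[ℂ] ℓ²(ℕ, ℂ)}
    (hT : ∀ n m, m < n → entry T n m = 0) : ∃ a : LevelAlgebra ℓ, a.1.2 = T := by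
  obtain ⟨Z, hZ⟩ := exists_weighted_upper_part hℓ T
  refine ⟨⟨(Z, T), mem_levelAlgebra_iff.2 fun n m => ?_⟩, rfl⟩
  rw [hZ]
  split_ifs with h
  · rfl
  · rw [hT n m (not_le.1 h), zero_mul]

/-- The backward shift changes the parity of the coordinates. -/
lemma exists_lift_shift (hℓ : StrictMono ℓ) : ∃ b ∈ offDiagonalIdeal (LevelAlgebra ℓ),
    b.1.2 = pullback (addRightEmbedding 1) ∧
      levelAdjoint b ∈ offDiagonalIdeal (LevelAlgebra ℓ) := by
  have hshift (n m : ℕ) (h : n + 1 ≠ m) :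
      entry (pullback (addRightEmbedding 1)) n m = 0 :=
    (entry_weightedComp _ _ n m).trans (if_neg h)
  obtain ⟨b, hb⟩ := exists_lift_of_upperTriangular hℓ fun n m h => hshift n m (by omega)
  have hparity (n m : ℕ) (h : n ∈ {k | Even k} ↔ m ∈ {k | Even k}) : coeff b n m = 0 := by
    rw [coeff, hb]
    refine hshift n m ?_
    rintro rfl
    simp only [Set.mem_ofPred_eq, Nat.even_add_one] at h
    tauto
  exact ⟨b, mem_offDiagonalIdeal_of_coeff_eq_zero _ hparity, hb,
    mem_offDiagonalIdeal_of_coeff_eq_zero _ fun n m h =>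
      coeff_levelAdjoint_eq_zero (hparity m n h.symm)⟩

lemma exists_eq_mul_shift_of_strictUpper (hℓ : StrictMono ℓ) {a b : LevelAlgebra ℓ}
    (ha : ∀ n m, m ≤ n → coeff a n m = 0) (hb : b.1.2 = pullback (addRightEmbedding 1)) :
    ∃ q, a = q * b := by
  classical
  have hq (n m : ℕ) (h : m < n) : entry (a.1.2 ∘L extendByZero (addRightEmbedding 1)) n m = 0 := by
    rw [entry_comp_extendByZero]
    exact ha n (m + 1) h
  obtain ⟨q, hq⟩ := exists_lift_of_upperTriangular hℓ hq
  refine ⟨q, ext_coeff fun n m => ?_⟩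
  have hmul : (q * b).1.2 = a.1.2 ∘L coordProj (Set.range (addRightEmbedding 1)) := by
    rw [← extendByZero_comp_pullback, ← ContinuousLinearMap.comp_assoc, ← hq, ← hb]
    rfl
  rw [coeff.eq_def (q * b), hmul, coordProj, entry_comp_diagonalOp, Set.indicator_apply]
  rcases m with - | m
  · simp [ha n 0 n.zero_le]
  · simp [coeff]

lemma mem_offDiagonalIdeal_of_strictUpper (hℓ : StrictMono ℓ) {a : LevelAlgebra ℓ}
    (ha : ∀ n m, m ≤ n → coeff a n m = 0) : a ∈ offDiagonalIdeal (LevelAlgebra ℓ) := by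
  obtain ⟨b, hbI, hb, -⟩ := exists_lift_shift hℓ
  obtain ⟨q, rfl⟩ := exists_eq_mul_shift_of_strictUpper hℓ ha hb
  exact TwoSidedIdeal.mul_mem_left _ _ _ hbI

lemma mem_offDiagonalIdeal_of_strictLower (hℓ : StrictMono ℓ) {a : LevelAlgebra ℓ}
    (ha : ∀ n m, n ≤ m → coeff a n m = 0) : a ∈ offDiagonalIdeal (LevelAlgebra ℓ) := by
  obtain ⟨b, -, hb, hbI⟩ := exists_lift_shift hℓ
  obtain ⟨q, hq⟩ := exists_eq_mul_shift_of_strictUpper hℓ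
    (fun n m h => coeff_levelAdjoint_eq_zero (ha m n h)) hb
  rw [← levelAdjoint_levelAdjoint a, hq, levelAdjoint_mul]
  exact TwoSidedIdeal.mul_mem_right _ _ _ hbI

/-- The lower part of `a.1.2` is bounded, being the adjoint of the weighted upper part of
`(a.1.1)†`. -/
lemma exists_strictUpper_part (hℓ : StrictMono ℓ) (a : LevelAlgebra ℓ) :
    ∃ u : LevelAlgebra ℓ, ∀ n m, coeff u n m = if n < m then coeff a n m else 0 := by
  obtain ⟨Z, hZ⟩ := exists_weighted_upper_part hℓ ((a.1.1)†)
  have hlower (n m : ℕ) : entry (Z†) n m = if m ≤ n then coeff a n m else 0 := by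
    rw [entry_adjoint, ← mul_right_inj' (weight_ne_zero ℓ m), ← star_weight, ← map_mul, hZ]
    split_ifs
    · rw [entry_adjoint, map_mul, star_weight, starRingEnd_self_apply, mul_comm, star_weight,
        mul_comm _ (coeff a n m), coeff_mul_weight]
    · rw [map_zero, mul_zero]
  obtain ⟨u, hu⟩ := exists_lift_of_upperTriangular hℓ (T := a.1.2 - Z†) fun n m h => by
    rw [entry_sub, hlower, if_pos h.le]
    exact sub_self _
  refine ⟨u, fun n m => ?_⟩
  rw [coeff, hu, entry_sub, hlower]
  split_ifs with h₁ h₂ h₂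
  · omega
  · exact sub_self _
  · exact sub_zero _
  · omega

lemma idempotentHull_levelAlgebra_of_strictMono (hℓ : StrictMono ℓ) :
    idempotentHull (LevelAlgebra ℓ) = ⊤ := by
  refine eq_top_iff.2 fun a _ => ?_
  obtain ⟨u, hu⟩ := exists_strictUpper_part hℓ a
  have hdiag (n : ℕ) : ‖coeff a n n‖ ≤ ‖a.1.2‖₊ := norm_entry_le _ n n
  have hupper : u ∈ offDiagonalIdeal (LevelAlgebra ℓ) :=
    mem_offDiagonalIdeal_of_strictUpper hℓ fun n m h => (hu n m).trans (if_neg h.not_gt)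
  have hlower : a - u - levelDiagonal ℓ hdiag ∈ offDiagonalIdeal (LevelAlgebra ℓ) :=
    mem_offDiagonalIdeal_of_strictLower hℓ fun n m h => by
      rw [coeff_sub, coeff_sub, hu, coeff_levelDiagonal]
      rcases h.eq_or_lt with rfl | h
      · simp
      · simp [h, h.ne]
  have hsplit : a = u + levelDiagonal ℓ hdiag + (a - u - levelDiagonal ℓ hdiag) := by abel
  rw [hsplit]
  exact add_mem (add_mem (mem_idempotentHull_of_mem_offDiagonalIdeal hupper)
    (levelDiagonal_mem_idempotentHull hdiag)) (mem_idempotentHull_of_mem_offDiagonalIdeal hlower)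

end Triangular

section LevelHull

variable {ι : Type*} {ℓ : ι → ℕ}

lemma orthogonalIdempotents_levelProj_singleton :
    OrthogonalIdempotents fun i : ι => levelProj ℓ {i} where
  idem i := isIdempotentElem_levelProj _
  ortho i j hij := by
    classical
    refine ext_coeff fun k l => ?_
    simp only [coeff_levelProj_mul, coeff_levelProj, Set.mem_singleton_iff, coeff_zero]
    split_ifs <;> grind

lemma levelProj_singleton_mul_mul (a : LevelAlgebra ℓ) (i : ι) :
    levelProj ℓ {i} * a * levelProj ℓ {i} = coeff a i i • levelProj ℓ {i} := by
  classical
  refine ext_coeff fun j k => ?_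
  simp only [coeff_mul_levelProj, coeff_levelProj_mul, coeff_smul, coeff_levelProj,
    Set.mem_singleton_iff]
  split_ifs <;> grind

lemma sum_levelProj_singleton [Fintype ι] : ∑ i, levelProj ℓ {i} = 1 := by
  classical
  refine ext_coeff fun j k => ?_
  simp only [coeff_sum, coeff_levelProj, coeff_one, Set.mem_singleton_iff]
  split_ifs with h <;> simp [h]

lemma idempotentHull_levelAlgebra_of_finite [Finite ι] :
    idempotentHull (LevelAlgebra ℓ) = ⊤ := by
  have := Fintype.ofFinite ι
  refine eq_top_iff.2 fun a _ => ?_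
  have hpeirce := sum_mul_mul_sum_mem_idempotentHull
    (orthogonalIdempotents_levelProj_singleton (ℓ := ℓ)) a fun i => by
      rw [levelProj_singleton_mul_mul]
      exact SMulMemClass.smul_mem _
        (mem_idempotentHull_of_isIdempotentElem (isIdempotentElem_levelProj _))
  rwa [sum_levelProj_singleton, one_mul, mul_one] at hpeirce

theorem idempotentHull_levelAlgebra (ℓ : ι → ℕ) : idempotentHull (LevelAlgebra ℓ) = ⊤ := by
  obtain ⟨s, hinj, hs⟩ := exists_levelProj_compl_mem_offDiagonalIdeal ℓ
  refine eq_top_iff.2 fun a _ => ?_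
  refine mem_idempotentHull_of_mul_mul_mem (e := levelProj ℓ s) (by rwa [one_sub_levelProj]) ?_
  rcases s.finite_or_infinite with hfin | hinf
  · have := hfin.to_subtype
    simpa using levelProj_range_mul_mul_mem_idempotentHull (.subtype (· ∈ s))
      idempotentHull_levelAlgebra_of_finite a
  · obtain ⟨f, rfl, hmono⟩ := exists_strictMono_level hinf hinj
    exact levelProj_range_mul_mul_mem_idempotentHull f
      (idempotentHull_levelAlgebra_of_strictMono hmono) a

end LevelHull

section LeftIdeal

variable {ι : Type*} {ℓ : ι → ℕ}

lemma coordProj_union {s t : Set ι} (h : Disjoint s t) :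
    coordProj (s ∪ t) = coordProj s + coordProj t := by
  classical
  ext x i
  have hi : i ∈ s → i ∉ t := fun hs ht => Set.disjoint_left.1 h hs ht
  simp only [coordProj_apply, Set.mem_union, add_apply, lp.coeFn_add, Pi.add_apply]
  split_ifs <;> simp_all

lemma coordProj_univ : coordProj (Set.univ : Set ι) = 1 := by
  ext x i
  exact coordProj_apply_of_mem (Set.mem_univ i) x

variable {L : Ideal (ℓ²(ι, ℂ) →L[ℂ] ℓ²(ι, ℂ))}

lemma coordProj_mem_of_finite (hL : ∀ i, coordProj {i} ∈ L) {s : Set ι} (hs : s.Finite) :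
    coordProj s ∈ L := by
  induction s, hs using Set.Finite.induction_on with
  | empty =>
    have : coordProj (∅ : Set ι) = 0 := by
      ext x i
      exact coordProj_apply_of_notMem (Set.notMem_empty i) x
    exact this ▸ L.zero_mem
  | insert hi _ ih =>
    rw [Set.insert_eq, coordProj_union (Set.disjoint_singleton_left.2 hi)]
    exact L.add_mem (hL _) ih

/-- Along a sequence of increasing level, the projections onto `f 0` and onto the range of
`f ∘ succ` add up, and the latter factors through the backward shift. -/
lemma coordProj_range_mem_of_strictMono {f : ℕ ↪ ι} (hf : StrictMono (ℓ ∘ f))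
    (hI : ∀ a ∈ offDiagonalIdeal (LevelAlgebra ℓ), a.1.2 ∈ L) (hL : ∀ i, coordProj {i} ∈ L) :
    coordProj (Set.range f) ∈ L := by
  let g : ℕ ↪ ι := (addRightEmbedding 1).trans f
  have hrange : Set.range f = {f 0} ∪ Set.range g := by
    ext i
    constructor
    · rintro ⟨n | n, rfl⟩
      exacts [.inl rfl, .inr ⟨n, rfl⟩]
    · rintro (rfl | ⟨n, rfl⟩)
      exacts [⟨0, rfl⟩, ⟨n + 1, rfl⟩]
  have hdisj : Disjoint {f 0} (Set.range g) := by
    rw [Set.disjoint_singleton_left]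
    rintro ⟨n, hn⟩
    exact n.succ_ne_zero (f.injective hn)
  obtain ⟨b, hbI, hb, -⟩ := exists_lift_shift hf
  have hshift : coordProj (Set.range g) =
      (extendByZero g ∘L pullback f) * (levelCorner ℓ f b).1.2 := by
    have hpull : pullback g = pullback (addRightEmbedding 1) ∘L pullback f := by
      ext x n
      simp [g]
    rw [← extendByZero_comp_pullback, levelCorner_snd, hb, hpull]
    ext1 x
    simp only [mul_apply_eq_comp, ContinuousLinearMap.comp_apply, pullback_extendByZero_apply]
  rw [hrange, coordProj_union hdisj, hshift]
  exact L.add_mem (hL _) (L.mul_mem_left _ (hI _ (map_mem_offDiagonalIdeal _ hbI)))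

lemma eq_top_of_offDiagonalIdeal_of_coordProj_mem
    (hI : ∀ a ∈ offDiagonalIdeal (LevelAlgebra ℓ), a.1.2 ∈ L) (hL : ∀ i, coordProj {i} ∈ L) :
    L = ⊤ := by
  obtain ⟨s, hinj, hs⟩ := exists_levelProj_compl_mem_offDiagonalIdeal ℓ
  have hmem : coordProj s ∈ L := by
    rcases s.finite_or_infinite with hfin | hinf
    · exact coordProj_mem_of_finite hL hfin
    · obtain ⟨f, rfl, hf⟩ := exists_strictMono_level hinf hinj
      exact coordProj_range_mem_of_strictMono hf hI hL
  rw [Ideal.eq_top_iff_one, ← coordProj_univ, ← Set.union_compl_self s,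
    coordProj_union disjoint_compl_right]
  exact L.add_mem hmem (hI _ hs)

end LeftIdeal

section BoundedOperators

lemma idempotentHull_continuousLinearMap_lp (ι : Type*) :
    idempotentHull (ℓ²(ι, ℂ) →L[ℂ] ℓ²(ι, ℂ)) = ⊤ := by
  let second : LevelAlgebra (fun _ : ι => 0) →ₙₐ[ℂ] ℓ²(ι, ℂ) →L[ℂ] ℓ²(ι, ℂ) :=
    { toFun a := a.1.2
      map_smul' _ _ := rfl
      map_zero' := rfl
      map_add' _ _ := rfl
      map_mul' _ _ := rfl }
  have hsurj : Function.Surjective second := fun T =>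
    ⟨⟨(T, T), mem_levelAlgebra_iff.2 fun i j => mul_comm _ _⟩, rfl⟩
  exact idempotentHull_eq_top_of_surjective second
    (continuous_snd.comp continuous_subtype_val) hsurj (idempotentHull_levelAlgebra _)

theorem idempotentHull_continuousLinearMap (X : Type*) [NormedAddCommGroup X]
    [InnerProductSpace ℂ X] [CompleteSpace X] : idempotentHull (X →L[ℂ] X) = ⊤ := by
  obtain ⟨w, b, -⟩ := exists_hilbertBasis ℂ X
  let e := b.repr.symm.toContinuousLinearEquiv.conjContinuousAlgEquiv
  exact idempotentHull_eq_top_of_surjective (NonUnitalAlgHomClass.toNonUnitalAlgHom e) e.continuous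
    e.surjective (idempotentHull_continuousLinearMap_lp w)

end BoundedOperators

section TwoSubspaceAlgebra

variable {G H : Type*} [NormedAddCommGroup G] [NormedSpace ℂ G] [NormedAddCommGroup H]
  [NormedSpace ℂ H]

/-- The algebra of bounded operators that leave `M` and `N` invariant: `Alg {0, M, N, H}`. -/
def twoSubspaceAlgebra (M N : Submodule ℂ H) : Subalgebra ℂ (H →L[ℂ] H) where
  carrier := {T | (∀ x ∈ M, T x ∈ M) ∧ ∀ x ∈ N, T x ∈ N}
  mul_mem' hT hT' := ⟨fun x hx => hT.1 _ (hT'.1 x hx), fun x hx => hT.2 _ (hT'.2 x hx)⟩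
  add_mem' hT hT' :=
    ⟨fun x hx => M.add_mem (hT.1 x hx) (hT'.1 x hx), fun x hx => N.add_mem (hT.2 x hx) (hT'.2 x hx)⟩
  algebraMap_mem' c := ⟨fun _ => M.smul_mem c, fun _ => N.smul_mem c⟩

lemma mem_twoSubspaceAlgebra {M N : Submodule ℂ H} {T : H →L[ℂ] H} :
    T ∈ twoSubspaceAlgebra M N ↔ (∀ x ∈ M, T x ∈ M) ∧ ∀ x ∈ N, T x ∈ N := Iff.rfl

noncomputable instance (M N : Submodule ℂ H) : Ring (twoSubspaceAlgebra M N) :=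
  Subalgebra.toRing _

variable {M N : Submodule ℂ H}

lemma idempotentHull_twoSubspaceAlgebra_of_comap_eq {M' N' : Submodule ℂ G} (Φ : G ≃L[ℂ] H)
    (hM : M.comap Φ.toLinearMap = M') (hN : N.comap Φ.toLinearMap = N')
    (h : idempotentHull (twoSubspaceAlgebra M' N') = ⊤) :
    idempotentHull (twoSubspaceAlgebra M N) = ⊤ := by
  subst hM hN
  let e := Φ.conjContinuousAlgEquiv
  have hmem (T : G →L[ℂ] G) : e T ∈ twoSubspaceAlgebra M N ↔
      T ∈ twoSubspaceAlgebra (M.comap Φ.toLinearMap) (N.comap Φ.toLinearMap) := by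
    simp [mem_twoSubspaceAlgebra, e, Φ.surjective.forall]
  let conj : twoSubspaceAlgebra (M.comap Φ.toLinearMap) (N.comap Φ.toLinearMap) →ₙₐ[ℂ]
      twoSubspaceAlgebra M N :=
    { toFun T := ⟨e T, (hmem _).2 T.2⟩
      map_smul' c T := Subtype.ext (map_smul e c T.1)
      map_zero' := Subtype.ext (map_zero e)
      map_add' T T' := Subtype.ext (map_add e T.1 T'.1)
      map_mul' T T' := Subtype.ext (map_mul e T.1 T'.1) }
  refine idempotentHull_eq_top_of_surjective conj
    ((e.continuous.comp continuous_subtype_val).subtype_mk _) (fun T => ?_) h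
  obtain ⟨T', hT'⟩ := e.surjective T
  exact ⟨⟨T', (hmem T').1 (hT' ▸ T.2)⟩, Subtype.ext hT'⟩

end TwoSubspaceAlgebra

section ModelAlgebra

variable {X Y E : Type*} [NormedAddCommGroup X] [NormedSpace ℂ X] [NormedAddCommGroup Y]
  [NormedSpace ℂ Y] [NormedAddCommGroup E] [NormedSpace ℂ E]

variable (X Y E) in
/-- The model of the first atom, `X × 0 × E × 0`. -/
def firstAtom : Submodule ℂ ((X × Y) × (E × E)) where
  carrier := {g | g.1.2 = 0 ∧ g.2.2 = 0}
  add_mem' hg hg' := by simp_all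
  zero_mem' := ⟨rfl, rfl⟩
  smul_mem' c g hg := by simp_all

variable (X Y) in
/-- The model of the second atom, the sum of `Y` and the graph of `S`. -/
def secondAtom (S : E →L[ℂ] E) : Submodule ℂ ((X × Y) × (E × E)) where
  carrier := {g | g.1.1 = 0 ∧ g.2.2 = S g.2.1}
  add_mem' hg hg' := by simp_all
  zero_mem' := ⟨rfl, (map_zero S).symm⟩
  smul_mem' c g hg := by simp_all

variable (X Y) in
/-- The two-atom algebra in the model position. -/
noncomputable def ModelAlgebra (S : E →L[ℂ] E) :
    Subalgebra ℂ ((X × Y) × (E × E) →L[ℂ] (X × Y) × (E × E)) :=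
  twoSubspaceAlgebra (firstAtom X Y E) (secondAtom X Y S)

noncomputable instance (S : E →L[ℂ] E) : Ring (ModelAlgebra X Y S) := Subalgebra.toRing _

instance (S : E →L[ℂ] E) : IsTopologicalSemiring (ModelAlgebra X Y S) := inferInstance

variable {S : E →L[ℂ] E}

variable (X Y S) in
/-- The block diagonal elements of the model algebra. -/
noncomputable def blockDiagonal :
    (X →L[ℂ] X) × (Y →L[ℂ] Y) × intertwinerAlgebra S →ₙₐ[ℂ] ModelAlgebra X Y S where
  toFun p := ⟨(p.1.prodMap p.2.1).prodMap (p.2.2.1.1.prodMap p.2.2.1.2), by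
    refine ⟨?_, ?_⟩
    · rintro ⟨⟨x, y⟩, k, k'⟩ ⟨hy, hk⟩
      exact ⟨(congrArg p.2.1 hy).trans (map_zero _), (congrArg p.2.2.1.2 hk).trans (map_zero _)⟩
    · rintro ⟨⟨x, y⟩, k, k'⟩ ⟨hx, hk⟩
      exact ⟨(congrArg p.1 hx).trans (map_zero _), (congrArg p.2.2.1.2 hk).trans
        (DFunLike.congr_fun (mem_intertwinerAlgebra.1 p.2.2.2) k)⟩⟩
  map_smul' _ _ := rfl
  map_zero' := rfl
  map_add' _ _ := rfl
  map_mul' _ _ := rfl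

lemma continuous_blockDiagonal : Continuous (blockDiagonal X Y S) := by
  have hthird : Continuous fun p : (X →L[ℂ] X) × (Y →L[ℂ] Y) × intertwinerAlgebra S =>
      (p.2.2 : (E →L[ℂ] E) × (E →L[ℂ] E)) := by fun_prop
  exact ((continuous_fst.prod_mapL ℂ (continuous_fst.comp continuous_snd)).prod_mapL ℂ
    (hthird.fst.prod_mapL ℂ hthird.snd)).subtype_mk _

variable (X Y S) in
/-- The operator `k' ↦ b k'` from the last summand to the third one, corrected so as to vanish on
the graph of `S`. -/
noncomputable def connector : (E →L[ℂ] E) →ₗ[ℂ] ModelAlgebra X Y S where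
  toFun b := ⟨(0 : (X × Y) →L[ℂ] X × Y).prodMap
    ((b ∘L (.snd ℂ E E - S ∘L .fst ℂ E E)).prod 0), by
      refine ⟨fun g _ => ⟨rfl, rfl⟩, ?_⟩
      rintro ⟨⟨x, y⟩, k, k'⟩ ⟨-, rfl : k' = S k⟩
      refine ⟨rfl, ?_⟩
      simp⟩
  map_add' b b' := by
    refine Subtype.ext (ContinuousLinearMap.ext fun g => ?_)
    exact Prod.ext (add_zero _).symm (Prod.ext rfl (add_zero _).symm)
  map_smul' c b := by
    refine Subtype.ext (ContinuousLinearMap.ext fun g => ?_)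
    exact Prod.ext (smul_zero _).symm (Prod.ext rfl (smul_zero _).symm)

lemma connector_mul_blockDiagonal (b : E →L[ℂ] E)
    (p : (X →L[ℂ] X) × (Y →L[ℂ] Y) × intertwinerAlgebra S) :
    connector X Y S b * blockDiagonal X Y S p = connector X Y S (b * p.2.2.1.2) := by
  refine Subtype.ext (ContinuousLinearMap.ext fun g => Prod.ext rfl (Prod.ext ?_ rfl))
  have hp : p.2.2.1.2 (S g.2.1) = S (p.2.2.1.1 g.2.1) :=
    DFunLike.congr_fun (mem_intertwinerAlgebra.1 p.2.2.2) g.2.1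
  change b (p.2.2.1.2 g.2.2 - S (p.2.2.1.1 g.2.1)) = b (p.2.2.1.2 (g.2.2 - S g.2.1))
  rw [map_sub p.2.2.1.2, hp]

lemma blockDiagonal_mul_connector (b : E →L[ℂ] E)
    (p : (X →L[ℂ] X) × (Y →L[ℂ] Y) × intertwinerAlgebra S) :
    blockDiagonal X Y S p * connector X Y S b = connector X Y S (p.2.2.1.1 * b) := by
  refine Subtype.ext (ContinuousLinearMap.ext fun g => Prod.ext ?_ (Prod.ext rfl ?_))
  · exact Prod.ext (map_zero _) (map_zero _)
  · exact map_zero p.2.2.1.2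

lemma connector_mul_connector (b b' : E →L[ℂ] E) :
    connector X Y S b * connector X Y S b' = -connector X Y S (b * S * b') := by
  refine Subtype.ext (ContinuousLinearMap.ext fun g => Prod.ext neg_zero.symm (Prod.ext ?_ ?_))
  · change b (0 - S (b' (g.2.2 - S g.2.1))) = -b (S (b' (g.2.2 - S g.2.1)))
    rw [zero_sub, map_neg]
  · exact neg_zero.symm

lemma exists_first_corner_eq (t : ModelAlgebra X Y S) : ∃ A,
    blockDiagonal X Y S (1, 0, 0) * t * blockDiagonal X Y S (1, 0, 0) =
      blockDiagonal X Y S (A, 0, 0) :=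
  ⟨(.fst ℂ X Y ∘L .fst ℂ (X × Y) (E × E)) ∘L t.1 ∘L (.inl ℂ (X × Y) (E × E) ∘L .inl ℂ X Y), rfl⟩

lemma exists_second_corner_eq (t : ModelAlgebra X Y S) : ∃ B,
    blockDiagonal X Y S (0, 1, 0) * t * blockDiagonal X Y S (0, 1, 0) =
      blockDiagonal X Y S (0, B, 0) :=
  ⟨(.snd ℂ X Y ∘L .fst ℂ (X × Y) (E × E)) ∘L t.1 ∘L (.inl ℂ (X × Y) (E × E) ∘L .inr ℂ X Y), rfl⟩

lemma exists_third_corner_eq (t : ModelAlgebra X Y S) : ∃ p b,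
    blockDiagonal X Y S (0, 0, 1) * t * blockDiagonal X Y S (0, 0, 1) =
      blockDiagonal X Y S (0, 0, p) + connector X Y S b := by
  let T : E × E →L[ℂ] E × E :=
    .snd ℂ (X × Y) (E × E) ∘L t.1 ∘L .inr ℂ (X × Y) (E × E)
  let b : E →L[ℂ] E := .fst ℂ E E ∘L T ∘L .inr ℂ E E
  let d : E →L[ℂ] E := .snd ℂ E E ∘L T ∘L .inr ℂ E E
  let z : E →L[ℂ] E := .fst ℂ E E ∘L T ∘L .inl ℂ E E + b ∘L S
  have hfirst (k : E) : (T (k, 0)).2 = 0 := (t.2.1 ((0, 0), (k, 0)) ⟨rfl, rfl⟩).2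
  have hsecond (k : E) : (T (k, S k)).2 = S (T (k, S k)).1 :=
    (t.2.2 ((0, 0), (k, S k)) ⟨rfl, rfl⟩).2
  have hadd (k k' : E) : T (k, k') = T (k, 0) + T (0, k') := by
    rw [← map_add, Prod.mk_add_mk, add_zero, zero_add]
  have hmem : d * S = S * z := by
    ext k
    have := hsecond k
    rw [hadd, Prod.snd_add, hfirst, zero_add] at this
    exact this
  refine ⟨⟨(z, d), hmem⟩, b, Subtype.ext (ContinuousLinearMap.ext fun g => Prod.ext ?_
    (Prod.ext ?_ ?_))⟩
  · exact (add_zero _).symm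
  · change (T (g.2.1, g.2.2)).1 = (T (g.2.1, 0)).1 + b (S g.2.1) + b (g.2.2 - S g.2.1)
    rw [hadd, map_sub, add_add_sub_cancel]
    rfl
  · change (T (g.2.1, g.2.2)).2 = d g.2.2 + 0
    rw [hadd, Prod.snd_add, hfirst, zero_add, add_zero]
    rfl

lemma orthogonalIdempotents_blocks :
    OrthogonalIdempotents (blockDiagonal X Y S ∘ ![(1, 0, 0), (0, 1, 0), (0, 0, 1)]) where
  idem i := by
    refine IsIdempotentElem.map ?_ (blockDiagonal X Y S)
    fin_cases i <;> simp [IsIdempotentElem]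
  ortho i j hij := by
    simp only [Function.comp_apply, ← map_mul]
    convert map_zero (blockDiagonal X Y S)
    fin_cases i <;> fin_cases j <;> simp at hij ⊢

lemma sum_blocks :
    ∑ i, (blockDiagonal X Y S ∘ ![(1, 0, 0), (0, 1, 0), (0, 0, 1)]) i = 1 := by
  simp only [Function.comp_apply, ← map_sum]
  have : ∑ i, ![((1, 0, 0) : (X →L[ℂ] X) × (Y →L[ℂ] Y) × intertwinerAlgebra S), (0, 1, 0),
      (0, 0, 1)] i = 1 := by
    simp [Fin.sum_univ_three]
  rw [this]
  rfl

lemma blockDiagonal_mem_idempotentHull (hX : idempotentHull (X →L[ℂ] X) = ⊤)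
    (hY : idempotentHull (Y →L[ℂ] Y) = ⊤) (hS : idempotentHull (intertwinerAlgebra S) = ⊤) (p) :
    blockDiagonal X Y S p ∈ idempotentHull (ModelAlgebra X Y S) := by
  have htop := idempotentHull_prod hX (idempotentHull_prod hY hS)
  exact map_mem_idempotentHull (blockDiagonal X Y S) continuous_blockDiagonal (htop ▸ trivial)

lemma idempotentHull_modelAlgebra_of_connector (hX : idempotentHull (X →L[ℂ] X) = ⊤)
    (hY : idempotentHull (Y →L[ℂ] Y) = ⊤) (hS : idempotentHull (intertwinerAlgebra S) = ⊤)
    (hconnector : ∀ b, connector X Y S b ∈ idempotentHull (ModelAlgebra X Y S)) :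
    idempotentHull (ModelAlgebra X Y S) = ⊤ := by
  have hblock := blockDiagonal_mem_idempotentHull hX hY hS
  refine eq_top_iff.2 fun t _ => ?_
  have hpeirce := sum_mul_mul_sum_mem_idempotentHull orthogonalIdempotents_blocks t fun i => by
    fin_cases i
    · obtain ⟨A, hA⟩ := exists_first_corner_eq t
      exact hA ▸ hblock _
    · obtain ⟨B, hB⟩ := exists_second_corner_eq t
      exact hB ▸ hblock _
    · obtain ⟨p, b, hp⟩ := exists_third_corner_eq t
      exact hp ▸ add_mem (hblock _) (hconnector b)
  rwa [sum_blocks, one_mul, mul_one] at hpeirce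

end ModelAlgebra

section Connector

variable {ι : Type*} {ℓ : ι → ℕ}

lemma coordProj_mul_mul_coordProj_singleton (b : ℓ²(ι, ℂ) →L[ℂ] ℓ²(ι, ℂ)) (i : ι) :
    coordProj {i} * b * coordProj {i} = entry b i i • coordProj {i} := by
  classical
  refine ext_entry fun j k => ?_
  have hleft : entry (coordProj {i} * b * coordProj {i}) j k =
      Set.indicator {i} 1 j * (entry b j k * Set.indicator {i} 1 k) := by
    have hcol : entry (b ∘L coordProj {i}) j k = entry b j k * Set.indicator {i} 1 k := by
      rw [coordProj, entry_comp_diagonalOp]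
    rw [mul_assoc, ← hcol]
    rfl
  have hright : entry (entry b i i • coordProj {i}) j k =
      entry b i i * entry (coordProj {i}) j k := rfl
  rw [hleft, hright, coordProj, entry_weightedComp, Function.Embedding.refl_apply]
  by_cases hj : j = i <;> by_cases hk : k = i <;> simp [hj, hk, Ne.symm]

lemma entry_weightOp_self (ℓ : ι → ℕ) (i : ι) : entry (weightOp ℓ) i i = weight ℓ i := by
  classical
  rw [weightOp, entry_weightedComp, Function.Embedding.refl_apply, if_pos rfl]

variable {A : Type*} [Ring A] [Algebra ℂ A] [TopologicalSpace A] [IsTopologicalSemiring A]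
  [ContinuousConstSMul ℂ A] {c : (ℓ²(ι, ℂ) →L[ℂ] ℓ²(ι, ℂ)) →ₗ[ℂ] A}
  {D : LevelAlgebra ℓ →ₙₐ[ℂ] A}

/-- Since `c P * c P = -w • c P` for `P = coordProj {i}` and `w = weight ℓ i`, a multiple of `c P`
is idempotent. -/
lemma map_coordProj_singleton_mem_idempotentHull
    (hcc : ∀ b b', c b * c b' = -c (b * weightOp ℓ * b')) (i : ι) :
    c (coordProj {i}) ∈ idempotentHull A := by
  have hP : coordProj {i} * weightOp ℓ * coordProj {i} = weight ℓ i • coordProj {i} := by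
    rw [coordProj_mul_mul_coordProj_singleton, entry_weightOp_self]
  have hw : weight ℓ i ≠ 0 := weight_ne_zero ℓ i
  have hidem : IsIdempotentElem (-(weight ℓ i)⁻¹ • c (coordProj {i})) := by
    rw [IsIdempotentElem, smul_mul_smul_comm, hcc, hP, map_smul, smul_neg, smul_smul, ← neg_smul]
    congr 1
    field_simp
  have hmem := SMulMemClass.smul_mem (-weight ℓ i) (mem_idempotentHull_of_isIdempotentElem hidem)
  rwa [smul_smul, neg_mul_neg, mul_inv_cancel₀ hw, one_smul] at hmem

lemma map_mul_coordProj_singleton_mem_idempotentHull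
    (hcD : ∀ b a, c b * D a = c (b * a.1.2)) (hDc : ∀ a b, D a * c b = c (a.1.1 * b))
    (hcc : ∀ b b', c b * c b' = -c (b * weightOp ℓ * b'))
    (b : ℓ²(ι, ℂ) →L[ℂ] ℓ²(ι, ℂ)) (i : ι) : c (b * coordProj {i}) ∈ idempotentHull A := by
  let e := D (levelProj ℓ {i})
  have he : IsIdempotentElem e := (isIdempotentElem_levelProj {i}).map D
  have hPP : coordProj {i} * coordProj {i} = coordProj {i} :=
    congrArg (fun a => a.1.2) (isIdempotentElem_levelProj (ℓ := ℓ) {i})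
  have hright : c (b * coordProj {i}) * e = c (b * coordProj {i}) := by
    rw [hcD, levelProj_snd, mul_assoc, hPP]
  have hcorner : e * c (b * coordProj {i}) ∈ idempotentHull A := by
    rw [hDc, levelProj_fst, ← mul_assoc, coordProj_mul_mul_coordProj_singleton, map_smul]
    exact SMulMemClass.smul_mem _ (map_coordProj_singleton_mem_idempotentHull hcc i)
  have hrest : (1 - e) * c (b * coordProj {i}) ∈ offDiagonalIdeal A := by
    refine mem_offDiagonalIdeal_of_mul_eq he.one_sub ?_ ?_
    · rw [← mul_assoc, he.one_sub.eq]
    · rw [mul_sub, mul_one, mul_assoc, hright, sub_self]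
  have hsplit : c (b * coordProj {i}) =
      e * c (b * coordProj {i}) + (1 - e) * c (b * coordProj {i}) := by
    rw [sub_mul, one_mul, add_sub_cancel]
  rw [hsplit]
  exact add_mem hcorner (mem_idempotentHull_of_mem_offDiagonalIdeal hrest)

lemma map_mem_idempotentHull_of_connector
    (hcD : ∀ b a, c b * D a = c (b * a.1.2)) (hDc : ∀ a b, D a * c b = c (a.1.1 * b))
    (hcc : ∀ b b', c b * c b' = -c (b * weightOp ℓ * b'))
    (b : ℓ²(ι, ℂ) →L[ℂ] ℓ²(ι, ℂ)) : c b ∈ idempotentHull A := by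
  let L : Ideal (ℓ²(ι, ℂ) →L[ℂ] ℓ²(ι, ℂ)) :=
    { carrier := {d | ∀ b, c (b * d) ∈ idempotentHull A}
      add_mem' := fun hd hd' b => by
        rw [mul_add, map_add]
        exact add_mem (hd b) (hd' b)
      zero_mem' := fun b => by
        rw [mul_zero, map_zero]
        exact zero_mem _
      smul_mem' := fun a d hd b => by
        rw [smul_eq_mul, ← mul_assoc]
        exact hd (b * a) }
  have hI (a : LevelAlgebra ℓ) (ha : a ∈ offDiagonalIdeal (LevelAlgebra ℓ)) : a.1.2 ∈ L :=
    fun b => hcD b a ▸ mem_idempotentHull_of_mem_offDiagonalIdeal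
      (TwoSidedIdeal.mul_mem_left _ _ _ (map_mem_offDiagonalIdeal D ha))
  have htop : L = ⊤ := eq_top_of_offDiagonalIdeal_of_coordProj_mem hI fun i b =>
    map_mul_coordProj_singleton_mem_idempotentHull hcD hDc hcc b i
  simpa only [mul_one] using (htop ▸ trivial : (1 : ℓ²(ι, ℂ) →L[ℂ] ℓ²(ι, ℂ)) ∈ L) b

end Connector

section ModelHull

variable {X Y ι : Type*} {ℓ : ι → ℕ}

lemma connector_mem_idempotentHull [NormedAddCommGroup X] [NormedSpace ℂ X] [NormedAddCommGroup Y]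
    [NormedSpace ℂ Y] (b : ℓ²(ι, ℂ) →L[ℂ] ℓ²(ι, ℂ)) :
    connector X Y (weightOp ℓ) b ∈ idempotentHull (ModelAlgebra X Y (weightOp ℓ)) := by
  let c := connector X Y (weightOp ℓ)
  let third : LevelAlgebra ℓ →ₙₐ[ℂ] (X →L[ℂ] X) × (Y →L[ℂ] Y) × LevelAlgebra ℓ :=
    (NonUnitalAlgHom.inr ℂ _ _).comp (NonUnitalAlgHom.inr ℂ _ _)
  let D := (blockDiagonal X Y (weightOp ℓ)).comp third
  have hcD (b) (a : LevelAlgebra ℓ) : c b * D a = c (b * a.1.2) :=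
    connector_mul_blockDiagonal b (third a)
  have hDc (a : LevelAlgebra ℓ) (b) : D a * c b = c (a.1.1 * b) :=
    blockDiagonal_mul_connector b (third a)
  exact map_mem_idempotentHull_of_connector hcD hDc connector_mul_connector b

theorem idempotentHull_modelAlgebra [NormedAddCommGroup X] [InnerProductSpace ℂ X] [CompleteSpace X]
    [NormedAddCommGroup Y] [InnerProductSpace ℂ Y] [CompleteSpace Y] (ℓ : ι → ℕ) :
    idempotentHull (ModelAlgebra X Y (weightOp ℓ)) = ⊤ :=
  idempotentHull_modelAlgebra_of_connector (idempotentHull_continuousLinearMap X)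
    (idempotentHull_continuousLinearMap Y) (idempotentHull_levelAlgebra ℓ)
    connector_mem_idempotentHull

end ModelHull

section SpectralSubspace

variable {U : Type*} [NormedAddCommGroup U] [InnerProductSpace ℂ U]

lemma re_inner_sub_smul_one_apply_self (G : U →L[ℂ] U) (l : ℝ) (x : U) :
    (⟪(G - (l : ℂ) • 1) x, x⟫_ℂ).re = (⟪G x, x⟫_ℂ).re - l * ‖x‖ ^ 2 := by
  have hx : ⟪x, x⟫_ℂ = ((‖x‖ ^ 2 : ℝ) : ℂ) := by
    rw [inner_self_eq_norm_sq_to_K]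
    norm_cast
  change (⟪G x - (l : ℂ) • x, x⟫_ℂ).re = _
  rw [inner_sub_left, inner_smul_left, Complex.conj_ofReal, hx, ← Complex.ofReal_mul,
    Complex.sub_re, Complex.ofReal_re]

lemma re_inner_nonneg_of_nonneg {B : U →L[ℂ] U} (hB : 0 ≤ B) (x : U) : 0 ≤ (⟪B x, x⟫_ℂ).re :=
  (B.nonneg_iff_isPositive.1 hB).re_inner_nonneg_left x

variable [CompleteSpace U] {G : U →L[ℂ] U} {l : ℝ} {x y : U}

/-- The spectral subspace of the self-adjoint operator `G` for the interval `(-∞, l]`. -/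
noncomputable def spectralSubspace (G : U →L[ℂ] U) (l : ℝ) : Submodule ℂ U :=
  (G - (l : ℂ) • 1)⁺.ker

lemma mem_spectralSubspace : x ∈ spectralSubspace G l ↔ (G - (l : ℂ) • 1)⁺ x = 0 := Iff.rfl

lemma isClosed_spectralSubspace (G : U →L[ℂ] U) (l : ℝ) :
    IsClosed (spectralSubspace G l : Set U) :=
  (G - (l : ℂ) • 1)⁺.isClosed_ker

instance : CompleteSpace (spectralSubspace G l) :=
  (isClosed_spectralSubspace G l).completeSpace_coe

lemma isSelfAdjoint_sub_smul_one (hG : IsSelfAdjoint G) (l : ℝ) :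
    IsSelfAdjoint (G - (l : ℂ) • 1) :=
  hG.sub (.smul (Complex.conj_ofReal l) (.one _))

lemma inner_map_eq_of_isSelfAdjoint {B : U →L[ℂ] U} (hB : IsSelfAdjoint B) (x y : U) :
    ⟪B x, y⟫_ℂ = ⟪x, B y⟫_ℂ :=
  (ContinuousLinearMap.isSelfAdjoint_iff_isSymmetric.1 hB) x y

lemma re_inner_le_of_mem_spectralSubspace (hG : IsSelfAdjoint G) (hx : x ∈ spectralSubspace G l) :
    (⟪G x, x⟫_ℂ).re ≤ l * ‖x‖ ^ 2 := by
  have hB : (G - (l : ℂ) • 1) x = -(G - (l : ℂ) • 1)⁻ x := by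
    nth_rw 1 [← CFC.posPart_sub_negPart _ (isSelfAdjoint_sub_smul_one hG l)]
    rw [sub_apply, mem_spectralSubspace.1 hx, zero_sub]
  have hre := re_inner_sub_smul_one_apply_self G l x
  rw [hB, inner_neg_left, Complex.neg_re] at hre
  linarith [re_inner_nonneg_of_nonneg (CFC.negPart_nonneg (G - (l : ℂ) • 1)) x]

lemma negPart_apply_eq_zero_of_mem_orthogonal (hx : x ∈ (spectralSubspace G l)ᗮ) :
    (G - (l : ℂ) • 1)⁻ x = 0 := by
  set B := G - (l : ℂ) • 1
  have hrange (z : U) : B⁻ z ∈ spectralSubspace G l :=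
    DFunLike.congr_fun (CFC.posPart_mul_negPart B) z
  rw [← inner_self_eq_zero (𝕜 := ℂ),
    inner_map_eq_of_isSelfAdjoint (CFC.negPart_nonneg B).isSelfAdjoint]
  exact Submodule.inner_left_of_mem_orthogonal (hrange _) hx

lemma le_re_inner_of_mem_orthogonal (hG : IsSelfAdjoint G) (hx : x ∈ (spectralSubspace G l)ᗮ) :
    l * ‖x‖ ^ 2 ≤ (⟪G x, x⟫_ℂ).re := by
  have hB : (G - (l : ℂ) • 1) x = (G - (l : ℂ) • 1)⁺ x := by
    nth_rw 1 [← CFC.posPart_sub_negPart _ (isSelfAdjoint_sub_smul_one hG l)]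
    rw [sub_apply, negPart_apply_eq_zero_of_mem_orthogonal hx, sub_zero]
  have hre := re_inner_sub_smul_one_apply_self G l x
  rw [hB] at hre
  linarith [re_inner_nonneg_of_nonneg (CFC.posPart_nonneg (G - (l : ℂ) • 1)) x]

lemma posPart_apply_mem_orthogonal (G : U →L[ℂ] U) (l : ℝ) (x : U) :
    (G - (l : ℂ) • 1)⁺ x ∈ (spectralSubspace G l)ᗮ := fun y hy => by
  rw [← inner_map_eq_of_isSelfAdjoint (CFC.posPart_nonneg _).isSelfAdjoint,
    mem_spectralSubspace.1 hy, inner_zero_left]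

lemma commute_posPart_sub_smul_one (G : U →L[ℂ] U) (l : ℝ) : Commute (G - (l : ℂ) • 1)⁺ G :=
  ((Commute.refl G).sub_left ((Commute.one_left G).smul_left _)).cfcₙ_real _

lemma map_mem_spectralSubspace {C : U →L[ℂ] U} (hC : Commute (G - (l : ℂ) • 1)⁺ C)
    (hx : x ∈ spectralSubspace G l) : C x ∈ spectralSubspace G l := by
  have hcomm : (G - (l : ℂ) • 1)⁺ (C x) = C ((G - (l : ℂ) • 1)⁺ x) := DFunLike.congr_fun hC.eq x
  rw [mem_spectralSubspace, hcomm, mem_spectralSubspace.1 hx, map_zero]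

lemma inner_map_eq_zero_of_mem_spectralSubspace (hx : x ∈ spectralSubspace G l)
    (hy : y ∈ (spectralSubspace G l)ᗮ) : ⟪G x, y⟫_ℂ = 0 :=
  Submodule.inner_right_of_mem_orthogonal
    (map_mem_spectralSubspace (commute_posPart_sub_smul_one G l) hx) hy

/-- The vector `(G - l')⁺ x` lies in the spectral subspace for `l` and in the orthogonal complement
of the one for `l'`, which leaves only `0` if `l < l'`. -/
lemma monotone_spectralSubspace (hG : IsSelfAdjoint G) : Monotone (spectralSubspace G) := by
  intro l l' hl x hx
  rcases hl.eq_or_lt with rfl | hlt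
  · exact hx
  have hcomm : Commute (G - (l : ℂ) • 1)⁺ (G - (l' : ℂ) • 1)⁺ :=
    (((commute_posPart_sub_smul_one G l).sub_right
      ((Commute.one_right _).smul_right _)).symm.cfcₙ_real _).symm
  have hupper := re_inner_le_of_mem_spectralSubspace hG (map_mem_spectralSubspace hcomm hx)
  have hlower := le_re_inner_of_mem_orthogonal hG (posPart_apply_mem_orthogonal G l' x)
  refine norm_eq_zero.1 (by_contra fun hne => ?_)
  have hpos : 0 < ‖(G - (l' : ℂ) • 1)⁺ x‖ ^ 2 := by positivity
  nlinarith

lemma spectralSubspace_eq_top (hG : IsSelfAdjoint G) (h : ∀ x, (⟪G x, x⟫_ℂ).re ≤ l * ‖x‖ ^ 2) :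
    spectralSubspace G l = ⊤ := by
  have hneg : G - (l : ℂ) • 1 ≤ 0 := by
    refine (ContinuousLinearMap.le_def _ _).2 ⟨?_, fun x => ?_⟩
    · exact ContinuousLinearMap.isSelfAdjoint_iff_isSymmetric.1
        ((IsSelfAdjoint.zero _).sub (isSelfAdjoint_sub_smul_one hG l))
    · have hre := re_inner_sub_smul_one_apply_self G l x
      rw [zero_sub, ContinuousLinearMap.reApplyInnerSelf_apply, neg_apply, inner_neg_left]
      change 0 ≤ (-⟪(G - (l : ℂ) • 1) x, x⟫_ℂ).re
      rw [Complex.neg_re]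
      linarith [h x]
  have hzero : (G - (l : ℂ) • 1)⁺ = 0 :=
    (CFC.posPart_eq_zero_iff _ (isSelfAdjoint_sub_smul_one hG l)).2 hneg
  exact eq_top_iff.2 fun x _ => mem_spectralSubspace.2 (DFunLike.congr_fun hzero x)

end SpectralSubspace

lemma norm_sq_sum_of_pairwise_inner_eq_zero {ι E : Type*} [NormedAddCommGroup E]
    [InnerProductSpace ℂ E] {x : ι → E} (hx : Pairwise fun i j => ⟪x i, x j⟫_ℂ = 0)
    (s : Finset ι) : ‖∑ i ∈ s, x i‖ ^ 2 = ∑ i ∈ s, ‖x i‖ ^ 2 := by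
  classical
  induction s using Finset.induction_on with
  | empty => simp
  | insert i s hi ih =>
    have horth : ⟪x i, ∑ j ∈ s, x j⟫_ℂ = 0 := by
      rw [inner_sum]
      exact Finset.sum_eq_zero fun j hj => hx (ne_of_mem_of_not_mem hj hi).symm
    rw [Finset.sum_insert hi, Finset.sum_insert hi, ← ih]
    simpa only [sq] using norm_add_sq_eq_norm_sq_add_norm_sq_of_inner_eq_zero _ _ horth

section SpectralLevel

variable {U F : Type*} [NormedAddCommGroup U] [InnerProductSpace ℂ U] [CompleteSpace U]
  [NormedAddCommGroup F] [InnerProductSpace ℂ F] [CompleteSpace F] {Q : U →L[ℂ] F}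
  {l : ℝ} {m n : ℕ} {x y : U}

lemma isSelfAdjoint_adjoint_comp_self (Q : U →L[ℂ] F) : IsSelfAdjoint (Q† ∘L Q) :=
  Q.isPositive_adjoint_comp_self.isSelfAdjoint

lemma re_inner_adjoint_comp_self (Q : U →L[ℂ] F) (x : U) :
    (⟪(Q† ∘L Q) x, x⟫_ℂ).re = ‖Q x‖ ^ 2 :=
  (Q.apply_norm_sq_eq_inner_adjoint_left x).symm

lemma norm_map_sq_le_of_mem_spectralSubspace (hx : x ∈ spectralSubspace (Q† ∘L Q) l) :
    ‖Q x‖ ^ 2 ≤ l * ‖x‖ ^ 2 :=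
  re_inner_adjoint_comp_self Q x ▸
    re_inner_le_of_mem_spectralSubspace (isSelfAdjoint_adjoint_comp_self Q) hx

lemma le_norm_map_sq_of_mem_orthogonal (hx : x ∈ (spectralSubspace (Q† ∘L Q) l)ᗮ) :
    l * ‖x‖ ^ 2 ≤ ‖Q x‖ ^ 2 :=
  re_inner_adjoint_comp_self Q x ▸
    le_re_inner_of_mem_orthogonal (isSelfAdjoint_adjoint_comp_self Q) hx

lemma inner_map_map_eq_zero_of_mem_spectralSubspace (hx : x ∈ spectralSubspace (Q† ∘L Q) l)
    (hy : y ∈ (spectralSubspace (Q† ∘L Q) l)ᗮ) : ⟪Q x, Q y⟫_ℂ = 0 := by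
  rw [← ContinuousLinearMap.adjoint_inner_left]
  exact inner_map_eq_zero_of_mem_spectralSubspace hx hy

/-- The vectors on which `Q† ∘L Q` has spectrum in `(16⁻⁽ⁿ⁺¹⁾, 16⁻ⁿ]`. -/
noncomputable def spectralLevel (Q : U →L[ℂ] F) (n : ℕ) : Submodule ℂ U :=
  spectralSubspace (Q† ∘L Q) ((1 / 16) ^ n) ⊓ (spectralSubspace (Q† ∘L Q) ((1 / 16) ^ (n + 1)))ᗮ

lemma antitone_spectralSubspace_pow (Q : U →L[ℂ] F) :
    Antitone fun n : ℕ => spectralSubspace (Q† ∘L Q) ((1 / 16) ^ n) := fun _ _ hmn =>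
  monotone_spectralSubspace (isSelfAdjoint_adjoint_comp_self Q)
    (pow_le_pow_of_le_one (by norm_num) (by norm_num) hmn)

instance : CompleteSpace (spectralLevel Q n) := by
  refine IsClosed.completeSpace_coe (hs := ?_)
  rw [spectralLevel, Submodule.coe_inf]
  exact (isClosed_spectralSubspace _ _).inter (Submodule.isClosed_orthogonal _)

lemma inner_eq_zero_of_mem_spectralLevel (hmn : m ≠ n) (hx : x ∈ spectralLevel Q m)
    (hy : y ∈ spectralLevel Q n) : ⟪x, y⟫_ℂ = 0 ∧ ⟪Q x, Q y⟫_ℂ = 0 := by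
  wlog hlt : n < m generalizing m n x y
  · obtain ⟨h, hQ⟩ := this hmn.symm hy hx (by omega)
    exact ⟨inner_eq_zero_symm.1 h, inner_eq_zero_symm.1 hQ⟩
  have hx' := antitone_spectralSubspace_pow Q hlt hx.1
  exact ⟨Submodule.inner_right_of_mem_orthogonal hx' hy.2,
    inner_map_map_eq_zero_of_mem_spectralSubspace hx' hy.2⟩

lemma eq_zero_of_forall_mem_spectralSubspace (hinj : Function.Injective Q)
    (hx : ∀ n : ℕ, x ∈ spectralSubspace (Q† ∘L Q) ((1 / 16) ^ n)) : x = 0 := by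
  have hlim : Filter.Tendsto (fun n : ℕ => (1 / 16 : ℝ) ^ n * ‖x‖ ^ 2) Filter.atTop (𝓝 0) := by
    simpa only [zero_mul] using (tendsto_pow_atTop_nhds_zero_of_lt_one (r := (1 / 16 : ℝ))
      (by norm_num) (by norm_num)).mul_const (‖x‖ ^ 2)
  have hsq : ‖Q x‖ ^ 2 ≤ 0 :=
    ge_of_tendsto' hlim fun n => norm_map_sq_le_of_mem_spectralSubspace (hx n)
  have hQx : Q x = 0 := by simpa using le_antisymm hsq (sq_nonneg _)
  exact hinj (hQx.trans (map_zero Q).symm)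

lemma spectralSubspace_one_eq_top (hQ : ∀ x, ‖Q x‖ ≤ ‖x‖) :
    spectralSubspace (Q† ∘L Q) 1 = ⊤ :=
  spectralSubspace_eq_top (isSelfAdjoint_adjoint_comp_self Q) fun x => by
    rw [re_inner_adjoint_comp_self, one_mul]
    exact pow_le_pow_left₀ (norm_nonneg _) (hQ x) 2

lemma iSup_spectralLevel_orthogonal (hQ : ∀ x, ‖Q x‖ ≤ ‖x‖) (hinj : Function.Injective Q) :
    (⨆ n, spectralLevel Q n)ᗮ = ⊥ := by
  refine (Submodule.eq_bot_iff _).2 fun x hx =>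
    eq_zero_of_forall_mem_spectralSubspace hinj fun n => ?_
  induction n with
  | zero => simp [spectralSubspace_one_eq_top hQ]
  | succ n ih =>
    let V := spectralSubspace (Q† ∘L Q) ((1 / 16) ^ (n + 1))
    have hdiff : x - V.starProjection x ∈ spectralLevel Q n :=
      ⟨sub_mem ih (antitone_spectralSubspace_pow Q n.le_succ (V.starProjection_apply_mem x)),
        V.sub_starProjection_mem_orthogonal x⟩
    have hinner : ⟪x - V.starProjection x, x⟫_ℂ = 0 :=
      Submodule.inner_right_of_mem_orthogonal (Submodule.mem_iSup_of_mem n hdiff) hx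
    have hself : ⟪x - V.starProjection x, x - V.starProjection x⟫_ℂ = 0 := by
      rw [inner_sub_right, hinner, Submodule.inner_left_of_mem_orthogonal
        (V.starProjection_apply_mem x) hdiff.2, sub_zero]
    rw [sub_eq_zero.1 (inner_self_eq_zero.1 hself)]
    exact V.starProjection_apply_mem x

lemma orthogonalFamily_spectralLevel (Q : U →L[ℂ] F) :
    OrthogonalFamily ℂ (fun n => spectralLevel Q n) fun n => (spectralLevel Q n).subtypeₗᵢ :=
  fun _ _ hmn x y => (inner_eq_zero_of_mem_spectralLevel hmn x.2 y.2).1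

end SpectralLevel

lemma exists_hilbertBasis_mem_of_orthogonalFamily {α : Type u} {U : Type v} [NormedAddCommGroup U]
    [InnerProductSpace ℂ U] [CompleteSpace U] {V : α → Submodule ℂ U} [∀ n, CompleteSpace (V n)]
    (hV : OrthogonalFamily ℂ (fun n => V n) fun n => (V n).subtypeₗᵢ) (hbot : (⨆ n, V n)ᗮ = ⊥) :
    ∃ (κ : Type (max u v)) (ℓ : κ → α) (b : HilbertBasis κ ℂ U), ∀ i, b i ∈ V (ℓ i) := by
  choose w b _ using fun n => exists_hilbertBasis ℂ (V n)
  have horthonormal := hV.orthonormal_sigma_orthonormal fun n => (b n).orthonormal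
  refine ⟨Σ n, w n, Sigma.fst, HilbertBasis.mkOfOrthogonalEqBot horthonormal ?_, fun i => ?_⟩
  · refine eq_bot_iff.2 (hbot ▸ fun x hx => ?_)
    rw [← Submodule.iInf_orthogonal, Submodule.mem_iInf]
    intro n
    rw [← Submodule.orthogonalProjectionOnto_eq_zero_iff]
    refine (b n).repr.injective (lp.ext (funext fun i => ?_))
    rw [HilbertBasis.repr_apply_apply, Submodule.inner_orthogonalProjectionOnto_eq_of_mem_left,
      map_zero]
    exact Submodule.inner_right_of_mem_orthogonal
      (Submodule.subset_span (Set.mem_range_self (⟨n, i⟩ : Σ n, w n))) hx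
  · rw [HilbertBasis.coe_mkOfOrthogonalEqBot]
    exact (b i.1 i.2).2

section PolarForm

variable {U : Type v} {F : Type*} [NormedAddCommGroup U] [InnerProductSpace ℂ U] [CompleteSpace U]
  [NormedAddCommGroup F] [InnerProductSpace ℂ F] [CompleteSpace F] {Q : U →L[ℂ] F}
  {κ : Type*} {ℓ : κ → ℕ}

lemma norm_map_sum_sq_bounds {x : κ → U} (hx : ∀ i, x i ∈ spectralLevel Q (ℓ i))
    (horth : Pairwise fun i j => ⟪x i, x j⟫_ℂ = 0) (s : Finset κ) :
    1 / 16 * ∑ i ∈ s, (1 / 16) ^ ℓ i * ‖x i‖ ^ 2 ≤ ‖Q (∑ i ∈ s, x i)‖ ^ 2 ∧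
      ‖Q (∑ i ∈ s, x i)‖ ^ 2 ≤ ∑ i ∈ s, (1 / 16) ^ ℓ i * ‖x i‖ ^ 2 := by
  let z (n : ℕ) : U := ∑ i ∈ s with ℓ i = n, x i
  have hz (n : ℕ) : z n ∈ spectralLevel Q n := Submodule.sum_mem _ fun i hi =>
    (Finset.mem_filter.1 hi).2 ▸ hx i
  have hmaps : ∀ i ∈ s, ℓ i ∈ s.image ℓ := fun i => Finset.mem_image_of_mem ℓ
  have hQ : ‖Q (∑ i ∈ s, x i)‖ ^ 2 = ∑ n ∈ s.image ℓ, ‖Q (z n)‖ ^ 2 := by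
    rw [← Finset.sum_fiberwise_of_maps_to hmaps, map_sum, norm_sq_sum_of_pairwise_inner_eq_zero]
    exact fun m n hmn => (inner_eq_zero_of_mem_spectralLevel hmn (hz m) (hz n)).2
  have hsum : ∑ i ∈ s, (1 / 16 : ℝ) ^ ℓ i * ‖x i‖ ^ 2 =
      ∑ n ∈ s.image ℓ, (1 / 16) ^ n * ‖z n‖ ^ 2 := by
    rw [← Finset.sum_fiberwise_of_maps_to hmaps]
    refine Finset.sum_congr rfl fun n _ => ?_
    rw [norm_sq_sum_of_pairwise_inner_eq_zero horth, Finset.mul_sum]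
    exact Finset.sum_congr rfl fun i hi => by rw [(Finset.mem_filter.1 hi).2]
  rw [hQ, hsum, Finset.mul_sum]
  refine ⟨Finset.sum_le_sum fun n _ => ?_, Finset.sum_le_sum fun n _ => ?_⟩
  · rw [← mul_assoc, ← pow_succ']
    exact le_norm_map_sq_of_mem_orthogonal (hz n).2
  · exact norm_map_sq_le_of_mem_spectralSubspace (hz n).1

lemma hasSum_unitVec (y : ℓ²(κ, ℂ)) : HasSum (fun i => y i • unitVec i) y := by
  classical
  simpa only [unitVec, ← lp.single_smul, smul_eq_mul, mul_one] using
    lp.hasSum_single (p := 2) (by norm_num) y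

lemma denseRange_weightOp (ℓ : κ → ℕ) : DenseRange (weightOp ℓ) := fun y => by
  refine mem_closure_of_tendsto (hasSum_unitVec y) (Filter.Eventually.of_forall fun s => ?_)
  refine ⟨∑ i ∈ s, (y i / weight ℓ i) • unitVec i, ?_⟩
  rw [map_sum]
  refine Finset.sum_congr rfl fun i _ => ?_
  rw [map_smul, weightOp, diagonalOp_unitVec, smul_smul, div_mul_cancel₀ _ (weight_ne_zero ℓ i)]

lemma norm_weightOp_sum_sq (y : ℓ²(κ, ℂ)) (s : Finset κ) :
    ‖weightOp ℓ (∑ i ∈ s, y i • unitVec i)‖ ^ 2 = ∑ i ∈ s, (1 / 16) ^ ℓ i * ‖y i‖ ^ 2 := by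
  classical
  have hunit (i : κ) : weightOp ℓ (y i • unitVec i) = (y i * weight ℓ i) • unitVec i := by
    rw [map_smul, weightOp, diagonalOp_unitVec, smul_smul]
  rw [map_sum, norm_sq_sum_of_pairwise_inner_eq_zero]
  · refine Finset.sum_congr rfl fun i _ => ?_
    rw [hunit, norm_smul, norm_unitVec, mul_one, norm_mul, norm_weight, mul_pow, mul_comm,
      pow_right_comm]
    norm_num
  · intro i j hij
    simp only [hunit]
    rw [inner_smul_left, inner_smul_right, inner_unitVec_left, unitVec_apply, if_neg hij, mul_zero,
      mul_zero]

lemma exists_linearIsometryEquiv_norm_sq_bounds (hQ : ∀ x, ‖Q x‖ ≤ ‖x‖)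
    (hinj : Function.Injective Q) :
    ∃ (κ : Type v) (ℓ : κ → ℕ) (u : ℓ²(κ, ℂ) ≃ₗᵢ[ℂ] U), ∀ y,
      1 / 16 * ‖weightOp ℓ y‖ ^ 2 ≤ ‖Q (u y)‖ ^ 2 ∧ ‖Q (u y)‖ ^ 2 ≤ ‖weightOp ℓ y‖ ^ 2 := by
  obtain ⟨κ, ℓ, b, hb⟩ := exists_hilbertBasis_mem_of_orthogonalFamily
    (orthogonalFamily_spectralLevel Q) (iSup_spectralLevel_orthogonal hQ hinj)
  refine ⟨κ, ℓ, b.repr.symm, fun y => ?_⟩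
  have hclosed : IsClosed {y | 1 / 16 * ‖weightOp ℓ y‖ ^ 2 ≤ ‖Q (b.repr.symm y)‖ ^ 2 ∧
      ‖Q (b.repr.symm y)‖ ^ 2 ≤ ‖weightOp ℓ y‖ ^ 2} := by
    simp only [Set.ofPred_and]
    exact (isClosed_le (by fun_prop) (by fun_prop)).inter (isClosed_le (by fun_prop) (by fun_prop))
  refine hclosed.mem_of_tendsto (hasSum_unitVec y) (Filter.Eventually.of_forall fun s => ?_)
  have horth : Pairwise fun i j => ⟪y i • b i, y j • b j⟫_ℂ = 0 := fun i j hij => by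
    simp only [inner_smul_left, inner_smul_right, b.orthonormal.2 hij, mul_zero]
  have hbounds := norm_map_sum_sq_bounds (fun i => Submodule.smul_mem _ (y i) (hb i)) horth s
  have hmap : b.repr.symm (∑ i ∈ s, y i • unitVec i) = ∑ i ∈ s, y i • b i := by
    classical
    simp [unitVec]
  simpa only [Set.mem_ofPred_eq, hmap, norm_weightOp_sum_sq, norm_smul, b.orthonormal.1, mul_one]
    using hbounds

lemma exists_comp_linearIsometryEquiv_eq_comp_weightOp (hQ : ∀ x, ‖Q x‖ ≤ ‖x‖)
    (hinj : Function.Injective Q) :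
    ∃ (κ : Type v) (ℓ : κ → ℕ) (u : ℓ²(κ, ℂ) ≃ₗᵢ[ℂ] U) (R : ℓ²(κ, ℂ) →L[ℂ] F),
      (∀ y, R (weightOp ℓ y) = Q (u y)) ∧ ∀ y, ‖y‖ ≤ 4 * ‖R y‖ := by
  obtain ⟨κ, ℓ, u, hu⟩ := exists_linearIsometryEquiv_norm_sq_bounds hQ hinj
  have hupper (y) : ‖Q (u y)‖ ≤ ‖weightOp ℓ y‖ :=
    le_of_sq_le_sq (hu y).2 (norm_nonneg _)
  have hlower (y) : ‖weightOp ℓ y‖ ≤ 4 * ‖Q (u y)‖ := by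
    refine le_of_sq_le_sq ?_ (by positivity)
    linarith [(hu y).1, mul_pow 4 ‖Q (u y)‖ 2]
  let R := (Q ∘L u.toContinuousLinearEquiv.toContinuousLinearMap).toLinearMap.extendOfNorm
    (weightOp ℓ).toLinearMap
  have hR (y) : R (weightOp ℓ y) = Q (u y) :=
    LinearMap.extendOfNorm_eq (denseRange_weightOp ℓ) ⟨1, fun y => by simpa using hupper y⟩ y
  refine ⟨κ, ℓ, u, R, hR, fun y => ?_⟩
  have hclosed : IsClosed {y | ‖y‖ ≤ 4 * ‖R y‖} := isClosed_le (by fun_prop) (by fun_prop)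
  refine (denseRange_weightOp ℓ).induction_on y hclosed fun y => ?_
  rw [hR]
  exact hlower y

end PolarForm

section Frame

variable {H Y E : Type*} [NormedAddCommGroup H] [InnerProductSpace ℂ H] [NormedAddCommGroup Y]
  [NormedSpace ℂ Y] [NormedAddCommGroup E] [NormedSpace ℂ E] {M N : Submodule ℂ H}
  {J : Y →L[ℂ] H} {T R : E →L[ℂ] H} {S : E →L[ℂ] E}

variable (M J T R) in
/-- The map `((x, y), (k, k')) ↦ x + J y + T k + R k'`, where `x` runs over the complement of the
range of `T` in `M`. It serves as the change of coordinates to the model position. -/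
noncomputable def frameMap : (↥(M ⊓ T.rangeᗮ) × Y) × (E × E) →L[ℂ] H :=
  ((M ⊓ T.rangeᗮ).subtypeL.coprod J).coprod (T.coprod R)

lemma frameMap_apply (g : (↥(M ⊓ T.rangeᗮ) × Y) × (E × E)) :
    frameMap M J T R g = g.1.1 + J g.1.2 + (T g.2.1 + R g.2.2) := rfl

variable [CompleteSpace M]

instance [CompleteSpace H] (K : Submodule ℂ H) : CompleteSpace ↥(M ⊓ Kᗮ) :=
  ((completeSpace_coe_iff_isComplete.1 ‹_›).isClosed.inter K.isClosed_orthogonal).completeSpace_coe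

variable (M J R) in
/-- The map `(y, k') ↦ P J y + R k'`, where `P` is the projection onto the complement of `M`. -/
noncomputable def transverseMap : Y × E →L[ℂ] H := (Mᗮ.starProjection ∘L J).coprod R

lemma starProjection_orthogonal_eq_zero_iff {x : H} : Mᗮ.starProjection x = 0 ↔ x ∈ M := by
  rw [Submodule.starProjection_apply_eq_zero_iff, M.orthogonal_orthogonal]

lemma surjective_frameMap [CompleteSpace T.range] (hT : ∀ k, T k ∈ M) (hR : ∀ k, R k ∈ Mᗮ)
    (hrange : Mᗮ ≤ (transverseMap M J R).range) : Function.Surjective (frameMap M J T R) := by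
  intro h
  obtain ⟨⟨y, k'⟩, hy⟩ := hrange (Mᗮ.starProjection_apply_mem h)
  have hmem : h - (J y + R k') ∈ T.range ⊔ T.rangeᗮ ⊓ M := by
    rw [Submodule.sup_orthogonal_inf_of_hasOrthogonalProjection (by rintro _ ⟨k, rfl⟩; exact hT k),
      ← starProjection_orthogonal_eq_zero_iff, map_sub, map_add,
      Submodule.starProjection_eq_self_iff.2 (hR _), sub_eq_zero]
    exact hy.symm
  obtain ⟨_, ⟨k, rfl⟩, x, hx, hsum : T k + x = h - (J y + R k')⟩ := Submodule.mem_sup.1 hmem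
  refine ⟨((⟨x, hx.symm⟩, y), (k, k')), ?_⟩
  rw [frameMap_apply, add_add_add_comm, add_comm x, hsum, sub_add_cancel]

variable (hT : ∀ k, T k ∈ M) (hR : ∀ k, R k ∈ Mᗮ)

include hT hR

lemma starProjection_orthogonal_frameMap (g : (↥(M ⊓ T.rangeᗮ) × Y) × (E × E)) :
    Mᗮ.starProjection (frameMap M J T R g) = transverseMap M J R (g.1.2, g.2.2) := by
  rw [frameMap_apply, map_add, map_add, map_add,
    starProjection_orthogonal_eq_zero_iff.2 g.1.1.2.1,
    starProjection_orthogonal_eq_zero_iff.2 (hT _),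
    Submodule.starProjection_eq_self_iff.2 (hR _), zero_add, zero_add]
  rfl

variable (hinj : Function.Injective (transverseMap M J R))

include hinj

lemma frameMap_mem_first_iff (g : (↥(M ⊓ T.rangeᗮ) × Y) × (E × E)) :
    frameMap M J T R g ∈ M ↔ g ∈ firstAtom ↥(M ⊓ T.rangeᗮ) Y E := by
  rw [← starProjection_orthogonal_eq_zero_iff, starProjection_orthogonal_frameMap hT hR,
    map_eq_zero_iff _ hinj, Prod.mk_eq_zero]
  rfl

variable (hTinj : Function.Injective T)

include hTinj

lemma injective_frameMap : Function.Injective (frameMap M J T R) := by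
  refine (injective_iff_map_eq_zero _).2 ?_
  rintro ⟨⟨x, y⟩, k, k'⟩ hg
  obtain ⟨rfl : y = 0, rfl : k' = 0⟩ :=
    (frameMap_mem_first_iff hT hR hinj _).1 (hg ▸ M.zero_mem)
  have hx : (x : H) + T k = 0 := by simpa [frameMap_apply] using hg
  have hTk : T k = 0 := by
    refine Submodule.disjoint_def.1 T.range.orthogonal_disjoint _ ⟨k, rfl⟩ ?_
    rw [← neg_eq_of_add_eq_zero_right hx]
    exact neg_mem x.2.2
  obtain rfl : k = 0 := (map_eq_zero_iff _ hTinj).1 hTk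
  obtain rfl : x = 0 := Subtype.ext (by simpa using hx)
  rfl

variable (hN : ∀ h, h ∈ N ↔ ∃ y k, h = J y + (T k + R (S k)))

include hN

lemma frameMap_mem_second_iff (g : (↥(M ⊓ T.rangeᗮ) × Y) × (E × E)) :
    frameMap M J T R g ∈ N ↔ g ∈ secondAtom ↥(M ⊓ T.rangeᗮ) Y S := by
  refine (hN _).trans ⟨?_, ?_⟩
  · rintro ⟨y, k, hg⟩
    have : frameMap M J T R g = frameMap M J T R ((0, y), (k, S k)) := by
      rw [hg, frameMap_apply, Submodule.coe_zero, zero_add]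
    obtain rfl := injective_frameMap hT hR hinj hTinj this
    exact ⟨rfl, rfl⟩
  · rintro ⟨hx, hk⟩
    exact ⟨g.1.2, g.2.1, by rw [frameMap_apply, hx, hk, Submodule.coe_zero, zero_add]⟩

theorem exists_continuousLinearEquiv_comap_eq_atoms [CompleteSpace H] [CompleteSpace Y]
    [CompleteSpace E] [CompleteSpace T.range] (hrange : Mᗮ ≤ (transverseMap M J R).range) :
    ∃ Φ : ((↥(M ⊓ T.rangeᗮ) × Y) × (E × E)) ≃L[ℂ] H,
      M.comap Φ.toLinearMap = firstAtom ↥(M ⊓ T.rangeᗮ) Y E ∧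
        N.comap Φ.toLinearMap = secondAtom ↥(M ⊓ T.rangeᗮ) Y S := by
  let Φ := ContinuousLinearEquiv.ofBijective (frameMap M J T R)
    (LinearMap.ker_eq_bot.2 (injective_frameMap hT hR hinj hTinj))
    (LinearMap.range_eq_top.2 (surjective_frameMap hT hR hrange))
  exact ⟨Φ, Submodule.ext fun g => frameMap_mem_first_iff hT hR hinj g,
    Submodule.ext fun g => frameMap_mem_second_iff hT hR hinj hTinj hN g⟩

end Frame

section BoundedBelow

variable {F G : Type*} [NormedAddCommGroup F] [NormedSpace ℂ F] [NormedAddCommGroup G]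
  [NormedSpace ℂ G] {D : F →L[ℂ] G} {c : ℝ≥0}

lemma injective_of_norm_le_mul_norm (hD : ∀ x, ‖x‖ ≤ c * ‖D x‖) : Function.Injective D :=
  (D.antilipschitz_of_bound hD).injective

lemma completeSpace_range_of_norm_le_mul_norm [CompleteSpace F] (hD : ∀ x, ‖x‖ ≤ c * ‖D x‖) :
    CompleteSpace D.range :=
  ((D.antilipschitz_of_bound hD).isComplete_range D.uniformContinuous).completeSpace_coe

end BoundedBelow

lemma norm_le_norm_add_of_inner_eq_zero {H : Type*} [NormedAddCommGroup H] [InnerProductSpace ℂ H]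
    {x y : H} (h : ⟪x, y⟫_ℂ = 0) : ‖x‖ ≤ ‖x + y‖ := by
  refine le_of_sq_le_sq ?_ (norm_nonneg _)
  rw [sq, sq, norm_add_sq_eq_norm_sq_add_norm_sq_of_inner_eq_zero x y h]
  exact le_add_of_nonneg_right (mul_self_nonneg _)

section Position

variable {H : Type v} [NormedAddCommGroup H] [InnerProductSpace ℂ H] {M N : Submodule ℂ H}
  [CompleteSpace M]

variable (M N) in
/-- The projection of `N` to the complement of `M`. On unit vectors its norm is the sine of the
angle with `M`. -/
noncomputable def sineMap : N →L[ℂ] H := Mᗮ.starProjection ∘L N.subtypeL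

lemma sineMap_apply_mem (n : N) : sineMap M N n ∈ Mᗮ := Mᗮ.starProjection_apply_mem n

lemma norm_sineMap_apply_le (n : N) : ‖sineMap M N n‖ ≤ ‖n‖ :=
  Mᗮ.norm_starProjection_apply_le n

lemma injective_sineMap (hMN : M ⊓ N = ⊥) : Function.Injective (sineMap M N) := by
  refine (injective_iff_map_eq_zero _).2 fun n hn => ?_
  have hmem : (n : H) ∈ M ⊓ N := ⟨starProjection_orthogonal_eq_zero_iff.1 hn, n.2⟩
  rw [hMN] at hmem
  exact Subtype.ext hmem

lemma eq_zero_of_inner_sineMap_eq_zero (hspan : (M ⊔ N).topologicalClosure = ⊤) {x : H}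
    (hx : x ∈ Mᗮ) (h : ∀ n, ⟪sineMap M N n, x⟫_ℂ = 0) : x = 0 := by
  have hN : x ∈ Nᗮ := fun n hn => by
    have := h ⟨n, hn⟩
    rwa [sineMap, ContinuousLinearMap.comp_apply, Submodule.inner_starProjection_left_eq_right,
      Submodule.starProjection_eq_self_iff.2 hx] at this
  have hmem : x ∈ (M ⊔ N).topologicalClosureᗮ := by
    rw [Submodule.orthogonal_closure, ← Submodule.inf_orthogonal]
    exact ⟨hx, hN⟩
  rwa [hspan, Submodule.top_orthogonal_eq_bot] at hmem

lemma mem_iff_exists_add_starProjection {E : Type*} [NormedAddCommGroup E] [NormedSpace ℂ E]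
    {S : E →L[ℂ] E} {R : E →L[ℂ] H} {V : Submodule ℂ N} [V.HasOrthogonalProjection]
    {u : E ≃L[ℂ] V} (hR : ∀ k, R (S k) = sineMap M N (u k)) (h : H) :
    h ∈ N ↔ ∃ (y : Vᗮ) (k : E), h = (y : N) + (M.starProjection (u k : N) + R (S k)) := by
  have hsplit (k : E) : M.starProjection (u k : N) + R (S k) = (u k : N) := by
    rw [hR]
    exact M.starProjection_add_starProjection_orthogonal _
  simp only [hsplit]
  constructor
  · intro hh
    obtain ⟨v, hv, y, hy, hn⟩ := V.exists_add_mem_mem_orthogonal ⟨h, hh⟩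
    obtain ⟨k, hk⟩ := u.surjective ⟨v, hv⟩
    refine ⟨⟨y, hy⟩, k, ?_⟩
    rw [hk, add_comm]
    exact congrArg Subtype.val hn
  · rintro ⟨y, k, rfl⟩
    exact add_mem (SetLike.coe_mem _) (SetLike.coe_mem _)

variable [CompleteSpace H]

lemma exists_sineMap_eq_comp_weightOp (hMN : M ⊓ N = ⊥) (V : Submodule ℂ N) [CompleteSpace V] :
    ∃ (κ : Type v) (ℓ : κ → ℕ) (u : ℓ²(κ, ℂ) ≃ₗᵢ[ℂ] V) (R : ℓ²(κ, ℂ) →L[ℂ] H),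
      (∀ k, R (weightOp ℓ k) = sineMap M N (u k)) ∧ ∀ k, ‖k‖ ≤ 4 * ‖R k‖ := by
  have hle (n : V) : ‖(sineMap M N ∘L V.subtypeL) n‖ ≤ ‖n‖ := norm_sineMap_apply_le n.1
  have hinj : Function.Injective (sineMap M N ∘L V.subtypeL) :=
    (injective_sineMap hMN).comp Subtype.val_injective
  exact exists_comp_linearIsometryEquiv_eq_comp_weightOp (U := V) hle hinj

variable [CompleteSpace N]

variable (M N) in
/-- The part of `N` on which the sine of the angle with `M` is at most `1 / 4`. -/
noncomputable def smallAngleSubspace : Submodule ℂ N :=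
  spectralSubspace ((sineMap M N)† ∘L sineMap M N) (1 / 16)

noncomputable instance : CompleteSpace (smallAngleSubspace M N) :=
  inferInstanceAs (CompleteSpace (spectralSubspace _ _))

lemma norm_le_mul_norm_sineMap {n : N} (hn : n ∈ (smallAngleSubspace M N)ᗮ) :
    ‖n‖ ≤ 4 * ‖sineMap M N n‖ := by
  refine le_of_sq_le_sq ?_ (by positivity)
  linarith [le_norm_map_sq_of_mem_orthogonal hn, mul_pow 4 ‖sineMap M N n‖ 2]

lemma norm_le_mul_norm_starProjection {n : N} (hn : n ∈ smallAngleSubspace M N) :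
    ‖n‖ ≤ 2 * ‖M.starProjection n‖ := by
  refine le_of_sq_le_sq ?_ (by positivity)
  have hsmall := norm_map_sq_le_of_mem_spectralSubspace hn
  have hpyth : ‖n‖ ^ 2 = ‖M.starProjection n‖ ^ 2 + ‖sineMap M N n‖ ^ 2 :=
    Submodule.norm_sq_eq_add_norm_sq_starProjection (n : H) M
  rw [mul_pow]
  linarith [sq_nonneg ‖n‖]

section Factorization

variable {E : Type*} [NormedAddCommGroup E] [NormedSpace ℂ E] {S : E →L[ℂ] E} {R : E →L[ℂ] H}

lemma orthogonal_le_range_transverseMap {u : E ≃L[ℂ] smallAngleSubspace M N}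
    (hspan : (M ⊔ N).topologicalClosure = ⊤)
    (hRmem : ∀ k, R k ∈ Mᗮ) (hR : ∀ k, R (S k) = sineMap M N (u k))
    [CompleteSpace
      (transverseMap M (N.subtypeL ∘L (smallAngleSubspace M N)ᗮ.subtypeL) R).range] :
    Mᗮ ≤ (transverseMap M (N.subtypeL ∘L (smallAngleSubspace M N)ᗮ.subtypeL) R).range := by
  set D := transverseMap M (N.subtypeL ∘L (smallAngleSubspace M N)ᗮ.subtypeL) R
  have hD (y : (smallAngleSubspace M N)ᗮ) (k : E) : D (y, k) = sineMap M N y + R k := rfl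
  have hle : D.range ≤ Mᗮ := by
    rintro _ ⟨⟨y, k⟩, rfl⟩
    exact add_mem (sineMap_apply_mem _) (hRmem k)
  have hsine (n : N) : sineMap M N n ∈ D.range := by
    obtain ⟨v, hv, y, hy, rfl⟩ := (smallAngleSubspace M N).exists_add_mem_mem_orthogonal n
    obtain ⟨k, hk⟩ := u.surjective ⟨v, hv⟩
    refine ⟨(⟨y, hy⟩, S k), ?_⟩
    change D _ = _
    rw [hD, hR, hk, ← map_add, add_comm]
  have hcompl : D.rangeᗮ ⊓ Mᗮ = ⊥ := (Submodule.eq_bot_iff _).2 fun x hx =>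
    eq_zero_of_inner_sineMap_eq_zero hspan hx.2 fun n =>
      Submodule.inner_right_of_mem_orthogonal (hsine n) hx.1
  rw [← Submodule.sup_orthogonal_inf_of_hasOrthogonalProjection hle, hcompl, sup_bot_eq]

variable {u : E → smallAngleSubspace M N} (hS : DenseRange S)
  (hR : ∀ k, R (S k) = sineMap M N (u k))

include hS hR

lemma apply_mem_orthogonal_of_comp_eq_sineMap (k : E) : R k ∈ Mᗮ := by
  refine hS.induction_on k (M.isClosed_orthogonal.preimage R.continuous) fun k => ?_
  rw [hR]
  exact sineMap_apply_mem _

lemma inner_sineMap_apply_eq_zero_of_comp_eq_sineMap (y : (smallAngleSubspace M N)ᗮ) (k : E) :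
    ⟪sineMap M N y, R k⟫_ℂ = 0 := by
  refine hS.induction_on k (isClosed_eq (by fun_prop) (by fun_prop)) fun k => ?_
  rw [hR, ← inner_conj_symm, inner_map_map_eq_zero_of_mem_spectralSubspace (u k).2 y.2, map_zero]

lemma norm_le_mul_norm_transverseMap (hRbound : ∀ k, ‖k‖ ≤ 4 * ‖R k‖)
    (p : (smallAngleSubspace M N)ᗮ × E) :
    ‖p‖ ≤ 4 * ‖transverseMap M (N.subtypeL ∘L (smallAngleSubspace M N)ᗮ.subtypeL) R p‖ := by
  obtain ⟨y, k⟩ := p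
  change _ ≤ 4 * ‖sineMap M N y + R k‖
  have horth := inner_sineMap_apply_eq_zero_of_comp_eq_sineMap hS hR y k
  refine max_le ((norm_le_mul_norm_sineMap y.2).trans ?_) ((hRbound k).trans ?_)
  · gcongr
    exact norm_le_norm_add_of_inner_eq_zero horth
  · rw [add_comm]
    gcongr
    exact norm_le_norm_add_of_inner_eq_zero (inner_eq_zero_symm.1 horth)

end Factorization

theorem idempotentHull_twoSubspaceAlgebra (hMN : M ⊓ N = ⊥)
    (hspan : (M ⊔ N).topologicalClosure = ⊤) : idempotentHull (twoSubspaceAlgebra M N) = ⊤ := by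
  let V := smallAngleSubspace M N
  obtain ⟨κ, ℓ, u, R, hR, hRbound⟩ := exists_sineMap_eq_comp_weightOp hMN V
  let J : Vᗮ →L[ℂ] H := N.subtypeL ∘L Vᗮ.subtypeL
  let T : ℓ²(κ, ℂ) →L[ℂ] H :=
    M.starProjection ∘L N.subtypeL ∘L V.subtypeL ∘L (u.toContinuousLinearEquiv : _ →L[ℂ] V)
  have hRmem := apply_mem_orthogonal_of_comp_eq_sineMap (denseRange_weightOp ℓ) hR
  have hu (k) : ‖(u k : N)‖ = ‖k‖ := u.norm_map k
  have hT (k) : ‖k‖ ≤ (2 : ℝ≥0) * ‖T k‖ :=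
    (hu k).ge.trans (norm_le_mul_norm_starProjection (u k).2)
  have hD (p) : ‖p‖ ≤ (4 : ℝ≥0) * ‖transverseMap M J R p‖ :=
    norm_le_mul_norm_transverseMap (denseRange_weightOp ℓ) hR hRbound p
  have := completeSpace_range_of_norm_le_mul_norm hT
  have := completeSpace_range_of_norm_le_mul_norm hD
  obtain ⟨Φ, hM, hN⟩ := exists_continuousLinearEquiv_comap_eq_atoms (T := T)
    (fun k => M.starProjection_apply_mem _) hRmem (injective_of_norm_le_mul_norm hD)
    (injective_of_norm_le_mul_norm hT)
    (mem_iff_exists_add_starProjection (u := u.toContinuousLinearEquiv) hR)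
    (orthogonal_le_range_transverseMap (u := u.toContinuousLinearEquiv) hspan hRmem hR)
  exact idempotentHull_twoSubspaceAlgebra_of_comap_eq Φ hM hN (idempotentHull_modelAlgebra ℓ)

end Position

end TwoAtomLattice

open TwoAtomLattice in
theorem two_atom_lattice_algebra_zpd_general (H : Type*) [NormedAddCommGroup H]
    [InnerProductSpace ℂ H] [CompleteSpace H]
    (M N : Submodule ℂ H) (hMc : IsClosed (M : Set H)) (hNc : IsClosed (N : Set H))
    (hMN : M ⊓ N = ⊥) (hspan : (M ⊔ N).topologicalClosure = ⊤)
    (S : Subalgebra ℂ (H →L[ℂ] H))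
    (hS : ∀ T : H →L[ℂ] H, T ∈ S ↔ (∀ x ∈ M, T x ∈ M) ∧ (∀ x ∈ N, T x ∈ N)) :
    ZeroProductDetermined ↥S := by
  obtain rfl : S = twoSubspaceAlgebra M N := SetLike.ext hS
  have := hMc.completeSpace_coe
  have := hNc.completeSpace_coe
  exact zeroProductDetermined_of_idempotentHull_eq_top (idempotentHull_twoSubspaceAlgebra hMN hspan)

set_option synthInstance.maxHeartbeats 1000000 in
/-- Let `H` be a complex separable Hilbert space and `ℒ = {0, M, N, H}` a subspace
lattice with two atoms on `H` (`M`, `N` closed subspaces with `M ∩ N = {0}` and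
closed linear span `M ∨ N = H`).  Then `Alg ℒ = {T ∈ B(H) : T(M) ⊆ M, T(N) ⊆ N}` is a
zero product determined Banach algebra. -/
theorem two_atom_lattice_algebra_zpd (H : Type*) [NormedAddCommGroup H]
    [InnerProductSpace ℂ H] [CompleteSpace H] [TopologicalSpace.SeparableSpace H]
    (M N : Submodule ℂ H) (hMc : IsClosed (M : Set H)) (hNc : IsClosed (N : Set H))
    (hMN : M ⊓ N = ⊥) (hspan : (M ⊔ N).topologicalClosure = ⊤)
    (S : Subalgebra ℂ (H →L[ℂ] H))
    (hS : ∀ T : H →L[ℂ] H, T ∈ S ↔ (∀ x ∈ M, T x ∈ M) ∧ (∀ x ∈ N, T x ∈ N)) :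
    ZeroProductDetermined ↥S :=
  two_atom_lattice_algebra_zpd_general H M N hMc hNc hMN hspan S hS
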